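/- Let D be a non-dictatorial, unidimensional domain and fix n ≥ 2. There exists no anonymous, tops-only and strategy-proof rule f : D^n → A if and only if D is a semi-hybrid domain satisfying the unique seconds property; moreover, if D is an (a,b)-semi-hybrid domain on a tree T and admits no anonymous, tops-only and strategy-proof rule, then every tops-only and strategy-proof rule f : D^n → A behaves like a dictatorship on the free zone ⟨a, b|T⟩. -/

import Mathlib

open Classical

set_option linter.unusedSectionVars false
set_option linter.unusedVariables false

/-- A strict preference over `A`, represented as a ranking bijection:
`P k` is the `(k+1)`-th ranked alternative. -/
abbrev Pref (A : Type*) [Fintype A] := Fin (Fintype.card A) ≃ A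

variable {A : Type*} [Fintype A] [DecidableEq A] [Nonempty A]

/-- `rk P k` : the `(k+1)`-th ranked alternative of `P` (0-indexed, so `rk P 0 = r₁(P)`). -/
noncomputable def rk (P : Pref A) (k : ℕ) : A :=
  if h : k < Fintype.card A then P ⟨k, h⟩ else Classical.arbitrary A

/-- The peak `r₁(P)`. -/
noncomputable def peak (P : Pref A) : A := rk P 0

/-- The second-ranked alternative `r₂(P)`. -/
noncomputable def second (P : Pref A) : A := rk P 1

/-- `a` is strictly preferred to `b` under `P`. -/
def prefers (P : Pref A) (a b : A) : Prop := P.symm a < P.symm b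

/-- Two preferences are completely reversed. -/
def Reversed (P P' : Pref A) : Prop := ∀ a b : A, prefers P a b ↔ prefers P' b a

/-- A profile lies in the domain `D`. -/
def InDom (D : Set (Pref A)) {n : ℕ} (P : Fin n → Pref A) : Prop := ∀ i, P i ∈ D

/-- Unanimity (an SCF satisfying it is called a rule). -/
def IsRule (D : Set (Pref A)) {n : ℕ} (f : (Fin n → Pref A) → A) : Prop :=
  ∀ P : Fin n → Pref A, InDom D P → ∀ a : A, (∀ i, peak (P i) = a) → f P = a

/-- Strategy-proofness (relative to the domain `D`). -/
def StrategyProof (D : Set (Pref A)) {n : ℕ} (f : (Fin n → Pref A) → A) : Prop :=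
  ∀ P : Fin n → Pref A, InDom D P → ∀ i : Fin n, ∀ Q ∈ D,
    f P = f (Function.update P i Q) ∨ prefers (P i) (f P) (f (Function.update P i Q))

/-- The tops-only property. -/
def TopsOnly (D : Set (Pref A)) {n : ℕ} (f : (Fin n → Pref A) → A) : Prop :=
  ∀ P P' : Fin n → Pref A, InDom D P → InDom D P' →
    (∀ i, peak (P i) = peak (P' i)) → f P = f P'

/-- Anonymity. -/
def Anonymous (D : Set (Pref A)) {n : ℕ} (f : (Fin n → Pref A) → A) : Prop :=
  ∀ P : Fin n → Pref A, InDom D P → ∀ σ : Equiv.Perm (Fin n), f (P ∘ σ) = f P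

/-- `f` behaves like a dictatorship on `B`. -/
def DictatorOn (D : Set (Pref A)) {n : ℕ} (f : (Fin n → Pref A) → A) (B : Set A) : Prop :=
  ∃ i : Fin n, ∀ P : Fin n → Pref A, InDom D P → (∀ j, peak (P j) ∈ B) → f P = peak (P i)

/-- `f` is a dictatorship. -/
def Dictatorship (D : Set (Pref A)) {n : ℕ} (f : (Fin n → Pref A) → A) : Prop :=
  DictatorOn D f Set.univ

/-- A dictatorial domain. -/
def DictatorialDomain (D : Set (Pref A)) : Prop :=
  ∀ n : ℕ, 2 ≤ n → ∀ f : (Fin n → Pref A) → A,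
    IsRule D f → StrategyProof D f → Dictatorship D f

/-- A tops-only domain. -/
def TopsOnlyDomain (D : Set (Pref A)) : Prop :=
  ∀ n : ℕ, 2 ≤ n → ∀ f : (Fin n → Pref A) → A,
    IsRule D f → StrategyProof D f → TopsOnly D f

/-- Adjacency of two alternatives relative to the domain `D`. -/
def DomAdjacent (D : Set (Pref A)) (a b : A) : Prop :=
  ∃ P ∈ D, ∃ P' ∈ D, peak P = a ∧ second P = b ∧ peak P' = b ∧ second P' = a ∧
    ∀ k : ℕ, 2 ≤ k → rk P k = rk P' k

/-- The adjacency graph `G_∼` of the domain `D`. -/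
noncomputable def adjGraph (D : Set (Pref A)) : SimpleGraph A :=
  SimpleGraph.fromRel (DomAdjacent D)

/-- Path-connectedness of the domain. -/
def PathConnectedDom (D : Set (Pref A)) : Prop := (adjGraph D).Connected

/-- Diversity: the domain contains two completely reversed preferences. -/
def Diversity (D : Set (Pref A)) : Prop := ∃ P ∈ D, ∃ P' ∈ D, Reversed P P'

/-- `S(D^a)`: the set of alternatives second-ranked in some preference of `D` with peak `a`. -/
def secondsSet (D : Set (Pref A)) (a : A) : Set A := {b | ∃ P ∈ D, peak P = a ∧ second P = b}

/-- Leaf symmetry. -/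
def LeafSymmetry (D : Set (Pref A)) : Prop :=
  ∀ x : A, (∃! y, (adjGraph D).Adj x y) →
    (∃ u ∈ secondsSet D x, ∃ v ∈ secondsSet D x, u ≠ v) →
    ∃ z ∈ secondsSet D x, ¬ (adjGraph D).Adj x z ∧ x ∈ secondsSet D z

/-- Unidimensionality: path-connectedness, diversity and leaf symmetry. -/
def Unidimensional (D : Set (Pref A)) : Prop :=
  PathConnectedDom D ∧ Diversity D ∧ LeafSymmetry D

/-- The unique seconds property. -/
def UniqueSeconds (D : Set (Pref A)) : Prop := ∃ x b : A, secondsSet D x = {b}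

/-- Minimal richness. -/
def MinimallyRich (D : Set (Pref A)) : Prop := ∀ a : A, ∃ P ∈ D, peak P = a

/-- The vertex set `⟨x, y|T⟩` of the (in a tree, unique) shortest path between `x` and `y`. -/
def intv (T : SimpleGraph A) (x y : A) : Set A :=
  {z | T.dist x z + T.dist z y = T.dist x y}

/-- `a'` is the projection of `a` onto `B` in `T`. -/
def IsProjPt (T : SimpleGraph A) (B : Set A) (a a' : A) : Prop :=
  a' ∈ B ∧ ∀ b ∈ B, a' ∈ intv T a b

/-- The projection `Proj(a, B)` of `a` onto a path-closed set `B` in the tree `T`. -/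
noncomputable def projOn (T : SimpleGraph A) (B : Set A) (a : A) : A :=
  if h : ∃ a', IsProjPt T B a a' then h.choose else a

/-- `Γ(P)`: the vertex set of the minimal subtree of `T` spanning all the peaks. -/
def gammaSet (T : SimpleGraph A) {n : ℕ} (P : Fin n → Pref A) : Set A :=
  {c | ∃ i j : Fin n, c ∈ intv T (peak (P i)) (peak (P j))}

/-- The projection rule on `T` w.r.t. `xbar`. -/
noncomputable def projRule (T : SimpleGraph A) (xbar : A) {n : ℕ}
    (P : Fin n → Pref A) : A :=
  projOn T (gammaSet T P) xbar

/-- Single-peakedness on a tree. -/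
def SinglePeaked (T : SimpleGraph A) (P : Pref A) : Prop :=
  ∀ c d : A, c ≠ d → c ∈ intv T (peak P) d → prefers P c d

/-- Semi-single-peakedness on `T` w.r.t. the threshold `xbar`. -/
def SemiSP (T : SimpleGraph A) (xbar : A) (P : Pref A) : Prop :=
  (∀ c d : A, c ∈ intv T (peak P) xbar → d ∈ intv T (peak P) xbar → c ≠ d →
    c ∈ intv T (peak P) d → prefers P c d) ∧
  (∀ c : A, c ∉ intv T (peak P) xbar →
    prefers P (projOn T (intv T (peak P) xbar) c) c)

/-- A semi-single-peaked domain. -/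
def SemiSPDomain (D : Set (Pref A)) : Prop :=
  ∃ (T : SimpleGraph A) (xbar : A), T.IsTree ∧
    D ⊆ {P | SemiSP T xbar P} ∧ (adjGraph D).Connected

/-- `A^{a⇀b}`: the alternatives whose path to `b` goes through `a`. -/
def sideSet (T : SimpleGraph A) (a b : A) : Set A := {z | a ∈ intv T z b}

/-- `x = max^P(B)`: `x` is `P`'s best alternative of `B`. -/
def IsBestOf (P : Pref A) (x : A) (B : Set A) : Prop :=
  x ∈ B ∧ ∀ y ∈ B, y ≠ x → prefers P x y

/-- `a` and `b` are dual-thresholds in the tree `T`. -/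
def DualThresholds (T : SimpleGraph A) (a b : A) : Prop :=
  a ≠ b ∧ ∀ c : A, c ∉ intv T a b →
    projOn T (intv T a b) c = a ∨ projOn T (intv T a b) c = b

/-- An `(a,b)`-semi-hybrid preference on `T`. -/
def SemiHybridPref (T : SimpleGraph A) (a b : A) (P : Pref A) : Prop :=
  (peak P ∈ sideSet T a b \ {a} → SemiSP T a P ∧ IsBestOf P b (sideSet T b a)) ∧
  (peak P ∈ sideSet T b a \ {b} → SemiSP T b P ∧ IsBestOf P a (sideSet T a b)) ∧
  (peak P ∈ intv T a b → IsBestOf P a (sideSet T a b) ∧ IsBestOf P b (sideSet T b a))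

/-- `x` is a leaf of the subgraph of `G` induced on `B`. -/
def IsLeafOn (G : SimpleGraph A) (B : Set A) (x : A) : Prop :=
  x ∈ B ∧ ∃! y, y ∈ B ∧ G.Adj x y

/-- `D` is an `(a,b)`-semi-hybrid domain on the tree `T`. -/
def SemiHybridDomainOn (D : Set (Pref A)) (T : SimpleGraph A) (a b : A) : Prop :=
  T.IsTree ∧ DualThresholds T a b ∧ D ⊆ {P | SemiHybridPref T a b P} ∧
  (adjGraph D).Connected ∧
  (¬ ∃ (T' : SimpleGraph A) (a' b' : A), T'.IsTree ∧ DualThresholds T' a' b' ∧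
      D ⊆ {P | SemiHybridPref T' a' b' P} ∧ intv T' a' b' ⊂ intv T a b) ∧
  ((adjGraph D).IsTree →
    ∀ x : A, IsLeafOn (adjGraph D) (intv T a b) x →
      ∃ P ∈ D, ¬ SemiSP (adjGraph D) x P)

/-- `D` is a semi-hybrid domain. -/
def SemiHybridDomain (D : Set (Pref A)) : Prop :=
  ∃ (T : SimpleGraph A) (a b : A), SemiHybridDomainOn D T a b

/-- An `(a,b)`-hybrid preference on `T`. -/
def HybridPref (T : SimpleGraph A) (a b : A) (P : Pref A) : Prop :=
  (∀ y z : A, ((y ∈ sideSet T a b ∧ z ∈ sideSet T a b) ∨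
      (y ∈ sideSet T b a ∧ z ∈ sideSet T b a)) → y ≠ z →
    y ∈ intv T (peak P) z → prefers P y z) ∧
  (peak P ∈ sideSet T a b \ {a} → IsBestOf P a (intv T a b)) ∧
  (peak P ∈ sideSet T b a \ {b} → IsBestOf P b (intv T a b))

/-- `D` is an `(a,b)`-hybrid domain on the tree `T`. -/
def HybridDomainOn (D : Set (Pref A)) (T : SimpleGraph A) (a b : A) : Prop :=
  T.IsTree ∧ DualThresholds T a b ∧ D ⊆ {P | HybridPref T a b P} ∧
  (adjGraph D).Connected ∧
  (¬ ∃ (T' : SimpleGraph A) (a' b' : A), T'.IsTree ∧ DualThresholds T' a' b' ∧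
      D ⊆ {P | HybridPref T' a' b' P} ∧ intv T' a' b' ⊂ intv T a b) ∧
  3 ≤ (intv T a b).ncard

/-- `f` is an `(a,b)`-hybrid rule on the tree `T`. -/
def IsHybridRule (D : Set (Pref A)) {n : ℕ} (f : (Fin n → Pref A) → A)
    (T : SimpleGraph A) (a b : A) : Prop :=
  T.IsTree ∧ DualThresholds T a b ∧ 3 ≤ (intv T a b).ncard ∧
  ∃ i : Fin n, ∀ P : Fin n → Pref A, InDom D P →
    (peak (P i) ∈ intv T a b → f P = peak (P i)) ∧
    (peak (P i) ∈ sideSet T a b \ {a} → f P = projOn T (gammaSet T P) a) ∧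
    (peak (P i) ∈ sideSet T b a \ {b} → f P = projOn T (gammaSet T P) b)

/-- The PNT rule on `T` w.r.t. the edge `(x, y)`, with the two distinguished voters `i, j`. -/
noncomputable def pntRule (T : SimpleGraph A) (x y : A) {n : ℕ} (i j : Fin n)
    (P : Fin n → Pref A) : A :=
  if peak (P i) ∈ sideSet T y x then peak (P i)
  else if peak (P j) ∈ sideSet T x y then projOn T (gammaSet T P) x
  else if prefers (P j) x y then x else y

/-- `(x, y)` is a critical spot in `T` for the domain `D`. -/
def CriticalSpot (D : Set (Pref A)) (T : SimpleGraph A) (x y : A) : Prop :=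
  T.Adj x y ∧
  (∀ P ∈ D, peak P ∈ sideSet T x y → SemiSP T y P) ∧
  (∀ P ∈ D, peak P ∈ sideSet T y x → IsBestOf P x (sideSet T x y)) ∧
  (∃ P ∈ D, ∃ P' ∈ D, peak P = peak P' ∧ peak P ∈ sideSet T y x ∧
    prefers P y x ∧ prefers P' x y)

/-- `x` is a path in the graph `G` (pairwise distinct, consecutive vertices adjacent). -/
def IsPathIn (G : SimpleGraph A) {v : ℕ} (x : Fin v → A) : Prop :=
  Function.Injective x ∧
  ∀ (k : ℕ) (h : k + 1 < v), G.Adj (x ⟨k, Nat.lt_of_succ_lt h⟩) (x ⟨k + 1, h⟩)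

/-- `x` is a cycle in the graph `G`. -/
def IsCycleIn (G : SimpleGraph A) {v : ℕ} (x : Fin v → A) : Prop :=
  Function.Injective x ∧
  (∀ (k : ℕ) (h : k + 1 < v), G.Adj (x ⟨k, Nat.lt_of_succ_lt h⟩) (x ⟨k + 1, h⟩)) ∧
  ∀ (h : 0 < v), G.Adj (x ⟨v - 1, Nat.sub_lt h Nat.one_pos⟩) (x ⟨0, h⟩)

/-- The line `L^A` induced by the ranking of the preference `P`. -/
noncomputable def lineOf (P : Pref A) : SimpleGraph A :=
  SimpleGraph.fromRel (fun a b =>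
    ∃ k : ℕ, k + 1 < Fintype.card A ∧ rk P k = a ∧ rk P (k + 1) = b)

/-- The median of three natural numbers. -/
def med3 (a b c : ℕ) : ℕ := max (min a b) (min (max a b) c)

/-- The two-voter profile in which voter `i` reports `Pi` and the other voter reports `Q`. -/
noncomputable def prof2 (i : Fin 2) (Pi Q : Pref A) : Fin 2 → Pref A :=
  Function.update (fun _ => Q) i Pi

/-! ## Part 1: preferences -/

/-- weak preference -/
def wk (P : Pref A) (x y : A) : Prop := P.symm x ≤ P.symm y

theorem wk_refl (P : Pref A) (x : A) : wk P x x := le_refl _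

theorem wk_trans {P : Pref A} {x y z : A} (h : wk P x y) (h' : wk P y z) : wk P x z :=
  le_trans h h'

theorem wk_antisymm {P : Pref A} {x y : A} (h : wk P x y) (h' : wk P y x) : x = y :=
  P.symm.injective (le_antisymm h h')

theorem wk_of_prefers {P : Pref A} {x y : A} (h : prefers P x y) : wk P x y := le_of_lt h

theorem wk_iff {P : Pref A} {x y : A} : wk P x y ↔ x = y ∨ prefers P x y := by
  unfold wk prefers
  rw [le_iff_lt_or_eq, or_comm, P.symm.injective.eq_iff]

theorem prefers_of_wk {P : Pref A} {x y : A} (h : wk P x y) (hne : x ≠ y) : prefers P x y :=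
  (wk_iff.1 h).resolve_left hne

theorem prefers_irrefl {P : Pref A} {x : A} : ¬ prefers P x x := lt_irrefl _

theorem prefers_not_wk {P : Pref A} {x y : A} (h : prefers P x y) : ¬ wk P y x :=
  not_le_of_gt h

theorem not_prefers {P : Pref A} {x y : A} : ¬ prefers P x y ↔ wk P y x := not_lt

theorem prefers_trans {P : Pref A} {x y z : A} (h : prefers P x y) (h' : prefers P y z) :
    prefers P x z := lt_trans h h'

theorem wk_total (P : Pref A) (x y : A) : wk P x y ∨ wk P y x := le_total _ _

theorem prefers_ne {P : Pref A} {x y : A} (h : prefers P x y) : x ≠ y := by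
  rintro rfl; exact prefers_irrefl h

theorem best_wk {P : Pref A} {x : A} {B : Set A} (h : IsBestOf P x B) {y : A} (hy : y ∈ B) :
    wk P x y := by
  by_cases e : y = x
  · subst e; exact wk_refl _ _
  · exact wk_of_prefers (h.2 y hy e)

theorem best_of_wk {P : Pref A} {x : A} {B : Set A} (hx : x ∈ B) (h : ∀ y ∈ B, wk P x y) :
    IsBestOf P x B := ⟨hx, fun y hy e => prefers_of_wk (h y hy) (Ne.symm e)⟩

theorem rk_symm (P : Pref A) (x : A) : rk P (P.symm x).val = x := by
  unfold rk; simp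

theorem symm_rk (P : Pref A) (k : ℕ) (h : k < Fintype.card A) : (P.symm (rk P k)).val = k := by
  unfold rk; simp [h]

theorem peak_wk (P : Pref A) (x : A) : wk P (peak P) x := by
  have h0 : 0 < Fintype.card A := Fintype.card_pos
  unfold wk
  rw [Fin.le_def]
  unfold peak
  rw [symm_rk P 0 h0]
  exact Nat.zero_le _

theorem peak_eq_of_wk {P : Pref A} {x : A} (h : wk P x (peak P)) : x = peak P :=
  wk_antisymm h (peak_wk P x)

theorem second_ne_peak (h3 : 3 ≤ Fintype.card A) (P : Pref A) : second P ≠ peak P := by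
  intro h
  have h1 := symm_rk P 0 (by omega)
  have h2 := symm_rk P 1 (by omega)
  unfold second peak at h
  rw [h] at h2; omega

theorem second_wk (h3 : 3 ≤ Fintype.card A) (P : Pref A) {x : A} (hx : x ≠ peak P) :
    wk P (second P) x := by
  unfold wk
  rw [Fin.le_def]
  unfold second
  rw [symm_rk P 1 (by omega)]
  rcases Nat.eq_zero_or_pos (P.symm x).val with h | h
  · exfalso; apply hx
    have := rk_symm P x
    rw [h] at this; exact this.symm
  · exact h

/-- value weakly better than the second is peak or second -/
theorem wk_second (h3 : 3 ≤ Fintype.card A) {P : Pref A} {x : A} (h : wk P x (second P)) :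
    x = peak P ∨ x = second P := by
  by_cases e : x = peak P
  · exact Or.inl e
  · exact Or.inr (wk_antisymm h (second_wk h3 P e))

theorem domAdj_symm {D : Set (Pref A)} {a b : A} (h : DomAdjacent D a b) : DomAdjacent D b a := by
  obtain ⟨P, hP, P', hP', h1, h2, h3, h4, h5⟩ := h
  exact ⟨P', hP', P, hP, h3, h4, h1, h2, fun k hk => (h5 k hk).symm⟩

theorem adj_iff {D : Set (Pref A)} {a b : A} : (adjGraph D).Adj a b ↔ a ≠ b ∧ DomAdjacent D a b := by
  unfold adjGraph
  rw [SimpleGraph.fromRel_adj]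
  constructor
  · rintro ⟨h, h' | h'⟩
    · exact ⟨h, h'⟩
    · exact ⟨h, domAdj_symm h'⟩
  · rintro ⟨h, h'⟩; exact ⟨h, Or.inl h'⟩

/-- adjacent preferences differ only on their two tops -/
theorem adj_step (h3 : 3 ≤ Fintype.card A) {P P' : Pref A} {a b : A}
    (h1 : peak P = a) (h2 : second P = b) (h1' : peak P' = b) (h2' : second P' = a)
    (hr : ∀ k : ℕ, 2 ≤ k → rk P k = rk P' k) {x y : A} (hxy : wk P x y) (hyx : wk P' y x) :
    x = y ∨ (x = a ∧ y = b) := by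
  by_cases e : x = y
  · exact Or.inl e
  right
  have key : ∀ z, z ≠ a → z ≠ b → (P.symm z).val = (P'.symm z).val := by
    intro z hza hzb
    have e1 := rk_symm P z
    have hk : 2 ≤ (P.symm z).val := by
      by_contra hlt
      have : (P.symm z).val = 0 ∨ (P.symm z).val = 1 := by omega
      rcases this with h | h
      · rw [h] at e1; exact hza (e1.symm.trans h1)
      · rw [h] at e1; exact hzb (e1.symm.trans h2)
    have := hr _ hk
    rw [e1] at this
    conv_rhs => rw [this]
    rw [symm_rk P' _ (P.symm z).isLt]
  have hab : b ≠ a := by rw [← h1, ← h2]; exact second_ne_peak h3 P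
  by_cases hxa : x = a
  · refine ⟨hxa, ?_⟩
    by_contra hyb
    subst hxa
    have : wk P' x y := by rw [← h2']; exact second_wk h3 P' (by rw [h1']; exact hyb)
    exact e (wk_antisymm this hyx)
  · exfalso
    by_cases hxb : x = b
    · subst hxb
      exact e (wk_antisymm (by rw [← h1']; exact peak_wk _ _) hyx)
    · by_cases hya : y = a
      · subst hya
        exact e (wk_antisymm hxy (by rw [← h1]; exact peak_wk _ _))
      · by_cases hyb : y = b
        · subst hyb
          exact e (wk_antisymm hxy (by rw [← h2]; exact second_wk h3 P (by rw [h1]; exact hxa)))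
        · have k1 := key x hxa hxb
          have k2 := key y hya hyb
          unfold wk at hxy hyx
          rw [Fin.le_def] at hxy hyx
          apply e
          apply P.symm.injective
          apply Fin.ext
          omega

theorem exists_nbr {V : Type*} [Fintype V] {H : SimpleGraph V} (hc : H.Connected)
    (h2 : 2 ≤ Fintype.card V) (x : V) : ∃ y, H.Adj x y := by
  obtain ⟨y, hy⟩ := Fintype.exists_ne_of_one_lt_card (by omega) x
  obtain ⟨w⟩ := hc.preconnected x y
  cases w with
  | nil => exact absurd rfl hy
  | cons h _ => exact ⟨_, h⟩

theorem rich_of_conn {D : Set (Pref A)} (h3 : 3 ≤ Fintype.card A) (hc : (adjGraph D).Connected) :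
    MinimallyRich D := by
  intro a
  obtain ⟨b, hb⟩ := exists_nbr hc (by omega) a
  obtain ⟨-, P, hP, -, -, h, -⟩ := adj_iff.1 hb
  exact ⟨P, hP, h⟩

theorem adj_pref {D : Set (Pref A)} {a b : A} (h : (adjGraph D).Adj a b) :
    ∃ P ∈ D, peak P = a ∧ second P = b := by
  obtain ⟨-, P, hP, -, -, h, h', -⟩ := adj_iff.1 h
  exact ⟨P, hP, h, h'⟩

theorem sp_wk {D : Set (Pref A)} {n : ℕ} {f : (Fin n → Pref A) → A} (h : StrategyProof D f)
    {P : Fin n → Pref A} (hP : InDom D P) (i : Fin n) {Q : Pref A} (hQ : Q ∈ D) :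
    wk (P i) (f P) (f (Function.update P i Q)) := by
  rw [wk_iff]; exact h P hP i Q hQ

/-! ## Part 2: cuts in graphs -/

/-- `U` is separated from its complement by the single edge `s t`. -/
def Cut {V : Type*} (H : SimpleGraph V) (U : Set V) (s t : V) : Prop :=
  s ∈ U ∧ t ∉ U ∧ H.Adj s t ∧ ∀ x ∈ U, ∀ y, y ∉ U → H.Adj x y → x = s ∧ y = t

section cuts
variable {V : Type*} {H : SimpleGraph V} {U : Set V} {s t : V}

theorem Cut.compl (h : Cut H U s t) : Cut H Uᶜ t s := by
  refine ⟨h.2.1, fun h' => h' h.1, h.2.2.1.symm, ?_⟩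
  intro x hx y hy hxy
  have hy' : y ∈ U := by by_contra h'; exact hy h'
  have := h.2.2.2 y hy' x hx hxy.symm
  exact ⟨this.2, this.1⟩

theorem adj_dist_le (hc : H.Connected) {x y : V} (h : H.Adj x y) (z : V) :
    H.dist x z ≤ H.dist y z + 1 := by
  have h1 := hc.dist_triangle (u := x) (v := y) (w := z)
  have h2 : H.dist x y = 1 := SimpleGraph.dist_eq_one_iff_adj.2 h
  omega

theorem cut_walk (hc : H.Connected) (h : Cut H U s t) {x y : V} (p : H.Walk x y) :
    x ∈ U → y ∉ U → H.dist x s + 1 + H.dist t y ≤ p.length := by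
  induction p with
  | nil => intro h1 h2; exact absurd h1 h2
  | @cons x z y e p ih =>
    intro h1 h2
    rw [SimpleGraph.Walk.length_cons]
    by_cases hz : z ∈ U
    · have := ih hz h2
      have := adj_dist_le hc e s
      omega
    · obtain ⟨rfl, rfl⟩ := h.2.2.2 x h1 z hz e
      have := SimpleGraph.dist_le p
      rw [SimpleGraph.dist_self]
      omega

theorem cut_dist (hc : H.Connected) (h : Cut H U s t) {x y : V} (hx : x ∈ U) (hy : y ∉ U) :
    H.dist x y = H.dist x s + 1 + H.dist t y := by
  obtain ⟨p, hp⟩ := hc.exists_walk_length_eq_dist x y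
  have h1 := cut_walk hc h p hx hy
  have h2 := hc.dist_triangle (u := x) (v := s) (w := y)
  have h3 := adj_dist_le hc h.2.2.1 y
  omega

theorem cut_dist' (hc : H.Connected) (h : Cut H U s t) {x y : V} (hx : x ∉ U) (hy : y ∈ U) :
    H.dist x y = H.dist x t + 1 + H.dist s y := by
  rw [H.dist_comm, cut_dist hc h hy hx, H.dist_comm, H.dist_comm (u := t)]; omega

theorem cut_mem_iff (hc : H.Connected) (h : Cut H U s t) (x : V) :
    x ∈ U ↔ H.dist x s < H.dist x t := by
  constructor
  · intro hx
    have := cut_dist hc h hx h.2.1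
    rw [SimpleGraph.dist_self] at this
    omega
  · intro hlt
    by_contra hx
    have := cut_dist' hc h hx h.1
    rw [SimpleGraph.dist_self] at this
    omega

theorem closer_nbr (hc : H.Connected) {x y : V} (hne : x ≠ y) :
    ∃ z, H.Adj x z ∧ H.dist z y + 1 = H.dist x y := by
  obtain ⟨p, hp⟩ := hc.exists_walk_length_eq_dist x y
  cases p with
  | nil => exact absurd rfl hne
  | @cons _ z _ e p =>
    refine ⟨z, e, ?_⟩
    rw [SimpleGraph.Walk.length_cons] at hp
    have := SimpleGraph.dist_le p
    have := adj_dist_le hc e y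
    omega

theorem dist_pos' (hc : H.Connected) {x y : V} (hne : x ≠ y) : 0 < H.dist x y :=
  hc.pos_dist_of_ne hne

theorem tree_cut (hT : H.IsTree) (h : H.Adj s t) : ∃ U, Cut H U s t := by
  have hb := SimpleGraph.isAcyclic_iff_forall_adj_isBridge.1 hT.isAcyclic h
  rw [SimpleGraph.isBridge_iff] at hb
  refine ⟨{x | (H.deleteEdges {s(s, t)}).Reachable s x}, SimpleGraph.Reachable.refl _, hb, h, ?_⟩
  intro x hx y hy hxy
  by_cases e : s(x, y) = s(s, t)
  · rw [Sym2.eq_iff] at e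
    rcases e with e | ⟨rfl, rfl⟩
    · exact e
    · exact absurd hx hb
  · exfalso; apply hy
    have : (H.deleteEdges {s(s, t)}).Adj x y := by
      rw [SimpleGraph.deleteEdges_adj]; exact ⟨hxy, e⟩
    exact SimpleGraph.Reachable.trans hx this.reachable

theorem tree_of_cuts (hc : H.Connected) (h : ∀ s t, H.Adj s t → ∃ U, Cut H U s t) : H.IsTree := by
  refine ⟨hc, ?_⟩
  rw [SimpleGraph.isAcyclic_iff_forall_adj_isBridge]
  intro s t hst
  rw [SimpleGraph.isBridge_iff]
  obtain ⟨U, hU⟩ := h s t hst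
  rintro ⟨p⟩
  have key : ∀ x y, (H.deleteEdges {s(s, t)}).Walk x y → x ∈ U → y ∈ U := by
    intro x y p
    induction p with
    | nil => exact id
    | @cons x z y e p ih =>
      intro hx
      apply ih
      by_contra hz
      rw [SimpleGraph.deleteEdges_adj] at e
      obtain ⟨rfl, rfl⟩ := hU.2.2.2 _ hx _ hz e.1
      exact e.2 rfl
  exact hU.2.1 (key _ _ p hU.1)

theorem exists_crossing (hc : H.Connected) {x y : V} (hx : x ∈ U) (hy : y ∉ U) :
    ∃ p ∈ U, ∃ q, q ∉ U ∧ H.Adj p q := by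
  obtain ⟨p⟩ := hc.preconnected x y
  induction p with
  | nil => exact absurd hx hy
  | @cons x z y e p ih =>
    by_cases hz : z ∈ U
    · exact ih hz hy
    · exact ⟨x, hx, z, hz, e⟩

end cuts

section trees
variable {T : SimpleGraph A}

theorem mem_intv {x y z : A} : z ∈ intv T x y ↔ T.dist x z + T.dist z y = T.dist x y := Iff.rfl

theorem intv_comm (x y : A) : intv T x y = intv T y x := by
  ext z
  rw [mem_intv, mem_intv, T.dist_comm (u := y) (v := x), T.dist_comm (u := y) (v := z),
    T.dist_comm (u := z) (v := x)]
  omega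

theorem left_mem_intv (x y : A) : x ∈ intv T x y := by
  rw [mem_intv, SimpleGraph.dist_self]; omega

theorem right_mem_intv (x y : A) : y ∈ intv T x y := by
  rw [mem_intv, SimpleGraph.dist_self]; omega

theorem intv_cut_mp (hc : T.Connected) {x y z : A} (h : z ∈ intv T x y) {U : Set A} {s t : A}
    (hU : Cut T U s t) (hz : z ∈ U) : x ∈ U ∨ y ∈ U := by
  by_contra hcon
  push Not at hcon
  rw [mem_intv] at h
  have h1 := cut_dist' hc hU hcon.1 hz
  have h2 := cut_dist hc hU hz hcon.2
  have h3 := hc.dist_triangle (u := x) (v := t) (w := y)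
  omega

theorem intv_cut_mpr (hT : T.IsTree) {y z : A} : ∀ (n : ℕ) (x : A), T.dist x z = n →
    (∀ U s t, Cut T U s t → z ∈ U → x ∈ U ∨ y ∈ U) → z ∈ intv T x y := by
  have hc := hT.connected
  intro n
  induction n with
  | zero =>
    intro x hx _
    rw [hc.dist_eq_zero_iff] at hx
    subst hx; exact left_mem_intv _ _
  | succ n ih =>
    intro x hx h
    have hne : x ≠ z := by rintro rfl; rw [SimpleGraph.dist_self] at hx; omega
    obtain ⟨x', e, hd⟩ := closer_nbr hc hne
    obtain ⟨U, hU⟩ := tree_cut hT e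
    have hzU : z ∉ U := by
      rw [cut_mem_iff hc hU, T.dist_comm, T.dist_comm (v := x')]; omega
    have hyU : y ∉ U := by
      rcases h _ _ _ hU.compl hzU with h' | h'
      · exact absurd hU.1 h'
      · exact h'
    have h1 := cut_dist hc hU hU.1 hyU
    rw [SimpleGraph.dist_self] at h1
    have h2 := ih x' (by omega) (by
      intro U' s t hU' hz
      by_contra hcon
      push Not at hcon
      rcases h _ _ _ hU' hz with h' | h'
      · obtain ⟨rfl, rfl⟩ := hU'.2.2.2 x h' x' hcon.1 e
        rw [cut_mem_iff hc hU', T.dist_comm, T.dist_comm (v := x')] at hz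
        omega
      · exact hcon.2 h')
    rw [mem_intv] at h2 ⊢
    omega

theorem intv_cut (hT : T.IsTree) {x y z : A} :
    z ∈ intv T x y ↔ ∀ U s t, Cut T U s t → z ∈ U → x ∈ U ∨ y ∈ U :=
  ⟨fun h _ _ _ hU hz => intv_cut_mp hT.connected h hU hz, intv_cut_mpr hT _ x rfl⟩

theorem cut_t_intv (hc : T.Connected) {x y : A} {U : Set A} {s t : A} (hU : Cut T U s t)
    (hx : x ∈ U) (hy : y ∉ U) : t ∈ intv T x y := by
  rw [mem_intv, cut_dist hc hU hx hy, cut_dist hc hU hx hU.2.1, SimpleGraph.dist_self]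

theorem exists_proj (hT : T.IsTree) (p q w : A) : ∃ c, IsProjPt T (intv T p q) w c := by
  have hc := hT.connected
  obtain ⟨c, hcB, hmin⟩ := Set.exists_min_image (intv T p q) (fun z => T.dist w z)
    (Set.toFinite _) ⟨p, left_mem_intv _ _⟩
  refine ⟨c, hcB, fun b hb => ?_⟩
  rw [intv_cut hT]
  intro U s t hU hz
  by_contra hcon
  push Not at hcon
  have ht : t ∈ intv T p q := by
    rcases intv_cut_mp hc hcB hU hz with h | h
    · rcases intv_cut_mp hc hb hU.compl hcon.2 with h' | h'
      · exact absurd h h'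
      · exact cut_t_intv hc hU h h'
    · rcases intv_cut_mp hc hb hU.compl hcon.2 with h' | h'
      · rw [intv_comm]; exact cut_t_intv hc hU h h'
      · exact absurd h h'
  have h1 := hmin t ht
  have h2 := cut_dist' hc hU hcon.1 hz
  omega

theorem projOn_spec (hT : T.IsTree) (p q w : A) :
    IsProjPt T (intv T p q) w (projOn T (intv T p q) w) := by
  have h := exists_proj hT p q w
  unfold projOn
  rw [dif_pos h]
  exact h.choose_spec

theorem ssp_cut (hT : T.IsTree) {xb : A} {P : Pref A} : SemiSP T xb P ↔
    ∀ U s t, Cut T U s t → xb ∉ U → peak P ∈ U → IsBestOf P t Uᶜ := by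
  have hc := hT.connected
  constructor
  · rintro ⟨h1, h2⟩ U s t hU hx hp
    have ht := cut_t_intv hc hU hp hx
    have key : ∀ c, c ∉ U → c ∈ intv T (peak P) xb → wk P t c := by
      intro c hcU hcB
      by_cases e : t = c
      · subst e; exact wk_refl _ _
      · exact wk_of_prefers (h1 t c ht hcB e (cut_t_intv hc hU hp hcU))
    refine best_of_wk hU.2.1 fun c hcU => ?_
    by_cases hcB : c ∈ intv T (peak P) xb
    · exact key c hcU hcB
    · have hpr := projOn_spec hT (peak P) xb c
      have := h2 c hcB
      refine wk_trans (key _ ?_ hpr.1) (wk_of_prefers this)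
      intro hm
      rcases intv_cut_mp hc (hpr.2 t ht) hU hm with h | h
      · exact hcU h
      · exact hU.2.1 h
  · intro h
    have key : ∀ c d, c ∈ intv T (peak P) xb → c ∈ intv T (peak P) d → c ≠ d → prefers P c d := by
      intro c d h1 h2 hne
      by_cases hp : c = peak P
      · rw [hp] at hne ⊢; exact prefers_of_wk (peak_wk _ _) hne
      · obtain ⟨s, e, hd⟩ := closer_nbr hc hp
        obtain ⟨U, hU⟩ := tree_cut hT e.symm
        have hpU : peak P ∈ U := by
          rw [cut_mem_iff hc hU, T.dist_comm, T.dist_comm (v := c)]; omega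
        have hxU : xb ∉ U := by
          rcases intv_cut_mp hc h1 hU.compl hU.2.1 with h' | h'
          · exact absurd hpU h'
          · exact h'
        have hdU : d ∉ U := by
          rcases intv_cut_mp hc h2 hU.compl hU.2.1 with h' | h'
          · exact absurd hpU h'
          · exact h'
        exact (h U s c hU hxU hpU).2 d hdU (Ne.symm hne)
    refine ⟨fun c d h1 h2 hne h3 => key c d h1 h3 hne, fun c hcn => ?_⟩
    have hpr := projOn_spec hT (peak P) xb c
    refine key _ _ hpr.1 ?_ ?_
    · rw [intv_comm]; exact hpr.2 _ (left_mem_intv _ _)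
    · intro e; apply hcn
      have := hpr.1
      rwa [e] at this

theorem chain_intv (hT : T.IsTree) {xb y l d : A} (hl : l ∈ intv T xb y) (hd : d ∈ intv T xb y)
    (hle : T.dist xb d ≤ T.dist xb l) : d ∈ intv T xb l := by
  have hc := hT.connected
  rw [intv_cut hT]
  intro U s t hU hdU
  by_contra hcon
  push Not at hcon
  have hy : y ∈ U := (intv_cut_mp hc hd hU hdU).resolve_left hcon.1
  have h1 := cut_dist' hc hU hcon.1 hdU
  have h2 := cut_dist' hc hU hcon.1 hy
  have h3 := cut_dist' hc hU hcon.2 hy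
  rw [mem_intv] at hl
  omega

end trees

/-! ## Part 3: arcs and hanging sets -/

/-- a cut edge of the adjacency graph such that preferences peaking behind it like its head best
outside -/
def Arc (D : Set (Pref A)) (U : Set A) (s t : A) : Prop :=
  Cut (adjGraph D) U s t ∧ ∀ P ∈ D, peak P ∈ U → IsBestOf P t Uᶜ

/-- `S` is a subtree of arcs hanging from `v` -/
def Hang (D : Set (Pref A)) (S : Set A) (v : A) : Prop :=
  v ∈ S ∧ (∀ x ∈ S, x ≠ v → ∃ U t, t ∈ S ∧ Arc D U x t ∧ U ⊆ S ∧ v ∉ U) ∧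
    ∀ P ∈ D, peak P ∉ S → IsBestOf P v S

/-- the zone left between two hanging sets -/
def zone (S S' : Set A) (v b : A) : Set A := (S ∪ S')ᶜ ∪ {v, b}

section hang
variable {D : Set (Pref A)} {S S' : Set A} {v b : A}

theorem hang_singleton (v : A) : Hang D {v} v := by
  refine ⟨rfl, fun x hx hne => absurd hx hne, fun P _ _ => ⟨rfl, ?_⟩⟩
  intro y hy hne
  exact absurd hy hne

theorem hang_edge (h : Hang D S v) {x y : A} (hx : x ∈ S) (hne : x ≠ v)
    (e : (adjGraph D).Adj x y) : y ∈ S := by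
  obtain ⟨U, t, ht, hA, hUS, hv⟩ := h.2.1 x hx hne
  by_cases hy : y ∈ U
  · exact hUS hy
  · obtain ⟨-, rfl⟩ := hA.1.2.2.2 x hA.1.1 y hy e
    exact ht

theorem hang_union (h : Hang D S v) (h' : Hang D S' v) : Hang D (S ∪ S') v := by
  refine ⟨Or.inl h.1, ?_, ?_⟩
  · rintro x (hx | hx) hne
    · obtain ⟨U, t, ht, hA, hUS, hv⟩ := h.2.1 x hx hne
      exact ⟨U, t, Or.inl ht, hA, fun _ hz => Or.inl (hUS hz), hv⟩
    · obtain ⟨U, t, ht, hA, hUS, hv⟩ := h'.2.1 x hx hne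
      exact ⟨U, t, Or.inr ht, hA, fun _ hz => Or.inr (hUS hz), hv⟩
  · intro P hP hp
    refine best_of_wk (Or.inl h.1) ?_
    rintro y (hy | hy)
    · exact best_wk (h.2.2 P hP fun h => hp (Or.inl h)) hy
    · exact best_wk (h'.2.2 P hP fun h => hp (Or.inr h)) hy

theorem hang_top (hc : (adjGraph D).Connected) (h : Hang D S v) :
    ∀ (n : ℕ) (p : A), (adjGraph D).dist p v = n → p ∈ S → p ≠ v →
    ∃ U x, x ∈ S ∧ Arc D U x v ∧ p ∈ U ∧ U ⊆ S ∧ v ∉ U := by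
  intro n
  induction n with
  | zero =>
    intro p hp _ hne
    rw [hc.dist_eq_zero_iff] at hp; exact absurd hp hne
  | succ n ih =>
    intro p hd hp hne
    obtain ⟨U, t, ht, hA, hUS, hv⟩ := h.2.1 p hp hne
    by_cases e : t = v
    · subst e; exact ⟨U, p, hp, hA, hA.1.1, hUS, hv⟩
    · have := cut_dist hc hA.1 hA.1.1 hv
      rw [SimpleGraph.dist_self] at this
      obtain ⟨U', x, hx, hA', htU, hUS', hv'⟩ := ih t (by omega) ht e
      refine ⟨U', x, hx, hA', ?_, hUS', hv'⟩
      by_contra hpU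
      exact hne (hA'.1.2.2.2 t htU p hpU hA.1.2.2.1.symm).2

theorem hang_out (hc : (adjGraph D).Connected) (h : Hang D S v) {P : Pref A} (hP : P ∈ D)
    (hp : peak P ∈ S) (hne : peak P ≠ v) {c : A} (hcS : c ∉ S) : prefers P v c := by
  obtain ⟨U, x, -, hA, hpU, hUS, -⟩ := hang_top hc h _ _ rfl hp hne
  refine (hA.2 P hP hpU).2 c (fun h => hcS (hUS h)) ?_
  rintro rfl; exact hcS h.1

theorem arc_of_edge (hc : (adjGraph D).Connected) (h : Hang D S v) {s t : A} (hs : s ∈ S)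
    (hne : s ≠ v) (e : (adjGraph D).Adj s t)
    (hd : (adjGraph D).dist t v ≤ (adjGraph D).dist s v) :
    ∃ U, Arc D U s t ∧ U ⊆ S ∧ v ∉ U := by
  obtain ⟨U, t', ht, hA, hUS, hv⟩ := h.2.1 s hs hne
  by_cases htU : t ∈ U
  · have h1 := cut_dist hc hA.1 htU hv
    have h2 := cut_dist hc hA.1 hA.1.1 hv
    rw [SimpleGraph.dist_self] at h2
    have h3 := dist_pos' hc e.ne'
    omega
  · obtain ⟨-, rfl⟩ := hA.1.2.2.2 s hA.1.1 t htU e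
    exact ⟨U, hA, hUS, hv⟩

/-- M3 -/
theorem hang_univ (hc : (adjGraph D).Connected) (h : Hang D Set.univ v) :
    (adjGraph D).IsTree ∧ ∀ P ∈ D, SemiSP (adjGraph D) v P := by
  have hT : (adjGraph D).IsTree := by
    refine tree_of_cuts hc fun s t e => ?_
    by_cases hd : (adjGraph D).dist t v ≤ (adjGraph D).dist s v
    · have hne : s ≠ v := by
        rintro rfl
        rw [SimpleGraph.dist_self] at hd
        have := dist_pos' hc e.ne'
        omega
      obtain ⟨U, hA, -⟩ := arc_of_edge hc h trivial hne e hd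
      exact ⟨U, hA.1⟩
    · have hne : t ≠ v := by
        rintro rfl
        rw [SimpleGraph.dist_self] at hd
        omega
      obtain ⟨U, hA, -⟩ := arc_of_edge hc h trivial hne e.symm (by omega)
      exact ⟨Uᶜ, hA.1.compl⟩
  refine ⟨hT, fun P hP => (ssp_cut hT).2 fun U s t hU hv hp => ?_⟩
  have h1 := cut_dist hc hU hU.1 hv
  rw [SimpleGraph.dist_self] at h1
  have hne : s ≠ v := by rintro rfl; exact hv hU.1
  obtain ⟨U', hA, -⟩ := arc_of_edge hc h trivial hne hU.2.2.1 (by omega)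
  have : U = U' := by
    ext x; rw [cut_mem_iff hc hU, cut_mem_iff hc hA.1]
  subst this
  exact hA.2 P hP hp

end hang

section M1
variable {D : Set (Pref A)} {T : SimpleGraph A} {a b : A}

theorem dual_symm (h : DualThresholds T a b) : DualThresholds T b a := by
  refine ⟨h.1.symm, fun c hc => ?_⟩
  rw [intv_comm] at hc ⊢
  exact (h.2 c hc).symm

theorem sh_symm {P : Pref A} (h : SemiHybridPref T a b P) : SemiHybridPref T b a P := by
  refine ⟨h.2.1, h.1, fun hp => ?_⟩
  rw [intv_comm] at hp
  exact (h.2.2 hp).symm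

theorem side_cover (hT : T.IsTree) (h : DualThresholds T a b) (c : A) :
    c ∈ intv T a b ∨ c ∈ sideSet T a b ∨ c ∈ sideSet T b a := by
  by_cases hc : c ∈ intv T a b
  · exact Or.inl hc
  right
  have hs := projOn_spec hT a b c
  rcases h.2 c hc with e | e
  · rw [e] at hs; left; exact hs.2 b (right_mem_intv _ _)
  · rw [e] at hs; right; exact hs.2 a (left_mem_intv _ _)

theorem hang_of_sh (h3 : 3 ≤ Fintype.card A) (hT : T.IsTree) (hdt : DualThresholds T a b)
    (hsh : ∀ P ∈ D, SemiHybridPref T a b P) (hG : (adjGraph D).Connected) :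
    Hang D (sideSet T a b) a := by
  have hc := hT.connected
  have build : ∀ x ∈ sideSet T a b, x ≠ a → ∃ U t, T.dist x a = T.dist t a + 1 ∧
      t ∈ sideSet T a b ∧ Cut T U x t ∧ U ⊆ sideSet T a b ∧ a ∉ U ∧
      ∀ P ∈ D, peak P ∈ U → IsBestOf P t Uᶜ := by
    intro x hx hxa
    obtain ⟨t, e, hd⟩ := closer_nbr hc hxa
    obtain ⟨U, hU⟩ := tree_cut hT e
    have haU : a ∉ U := by
      rw [cut_mem_iff hc hU, T.dist_comm, T.dist_comm (v := t)]; omega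
    have hbU : b ∉ U := by
      rcases intv_cut_mp hc hx hU.compl haU with h | h
      · exact absurd hU.1 h
      · exact h
    have h1 := cut_dist hc hU hU.1 hbU
    have h2 := cut_dist hc hU hU.1 haU
    have hx' : T.dist x a + T.dist a b = T.dist x b := hx
    rw [SimpleGraph.dist_self] at h1 h2
    have hUS : U ⊆ sideSet T a b := by
      intro w hw
      have h3 := cut_dist hc hU hw hbU
      have h4 := cut_dist hc hU hw haU
      change T.dist w a + T.dist a b = T.dist w b
      omega
    refine ⟨U, t, by omega, ?_, hU, hUS, haU, ?_⟩
    · change T.dist t a + T.dist a b = T.dist t b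
      omega
    · intro P hP hp
      have := ((hsh P hP).1 ⟨hUS hp, fun h => haU (h ▸ hp)⟩).1
      exact (ssp_cut hT).1 this U x t hU haU hp
  refine ⟨left_mem_intv _ _, ?_, ?_⟩
  · intro x hx hxa
    obtain ⟨U, t, hd, htS, hU, hUS, haU, hbest⟩ := build x hx hxa
    have hcross : ∀ p ∈ U, ∀ q, q ∉ U → (adjGraph D).Adj p q → p = x ∧ q = t := by
      intro p hp q hq e
      obtain ⟨P, hP, hpk, hsec⟩ := adj_pref e
      have hqt : ∀ {U' : Set A} {t' : A}, IsBestOf P t' U'ᶜ → p ∈ U' → q ∉ U' → q = t' := by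
        intro U' t' hb hp' hq'
        have h1 : t' ≠ peak P := by rintro rfl; rw [hpk] at hb; exact hb.1 hp'
        have := second_wk h3 P h1
        rw [hsec] at this
        exact wk_antisymm this (best_wk hb hq')
      have hq1 : q = t := hqt (hbest P hP (by rw [hpk]; exact hp)) hp hq
      refine ⟨?_, hq1⟩
      have hpa : p ≠ a := by rintro rfl; exact haU hp
      obtain ⟨U', t', hd', htS', hU', hUS', haU', hbest'⟩ := build p (hUS hp) hpa
      by_cases hqU' : q ∈ U'
      · exfalso
        rw [hq1] at hqU'
        have h1 := cut_dist hc hU hp haU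
        have h2 := cut_dist hc hU' hqU' haU'
        omega
      · have : q = t' := hqt (hbest' P hP (by rw [hpk]; exact hU'.1)) hU'.1 hqU'
        refine (hU.2.2.2 p hp t hU.2.1 ?_).1
        rw [← hq1, this]; exact hU'.2.2.1
    obtain ⟨p, hp, q, hq, e⟩ := exists_crossing hG hU.1 haU
    have := hcross p hp q hq e
    rw [this.1, this.2] at e
    exact ⟨U, t, htS, ⟨⟨hU.1, hU.2.1, e, hcross⟩, hbest⟩, hUS, haU⟩
  · intro P hP hp
    rcases side_cover hT hdt (peak P) with h | h | h
    · exact ((hsh P hP).2.2 h).1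
    · exact absurd h hp
    · by_cases e : peak P = b
      · exact ((hsh P hP).2.2 (e ▸ right_mem_intv _ _)).1
      · exact ((hsh P hP).2.1 ⟨h, e⟩).2

theorem side_disj (hT : T.IsTree) (hab : a ≠ b) : Disjoint (sideSet T a b) (sideSet T b a) := by
  rw [Set.disjoint_left]
  intro z h1 h2
  have h1' : T.dist z a + T.dist a b = T.dist z b := h1
  have h2' : T.dist z b + T.dist b a = T.dist z a := h2
  have := dist_pos' hT.connected hab
  rw [T.dist_comm (u := b)] at h2'
  omega

theorem intv_eq_zone (hT : T.IsTree) (hdt : DualThresholds T a b) :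
    intv T a b = zone (sideSet T a b) (sideSet T b a) a b := by
  have hc := hT.connected
  ext z
  constructor
  · intro hz
    have hz' : T.dist a z + T.dist z b = T.dist a b := hz
    have e1 := T.dist_comm (u := a) (v := z)
    have e2 := T.dist_comm (u := a) (v := b)
    by_cases h1 : z ∈ sideSet T a b
    · have h1' : T.dist z a + T.dist a b = T.dist z b := h1
      right; left
      exact hc.dist_eq_zero_iff.1 (by omega)
    by_cases h2 : z ∈ sideSet T b a
    · have h1' : T.dist z b + T.dist b a = T.dist z a := h2
      right; right
      exact hc.dist_eq_zero_iff.1 (by omega)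
    left
    rintro (h | h)
    · exact h1 h
    · exact h2 h
  · rintro (h | rfl | rfl)
    · rcases side_cover hT hdt z with h' | h' | h'
      · exact h'
      · exact absurd (Or.inl h') h
      · exact absurd (Or.inr h') h
    · exact left_mem_intv _ _
    · exact right_mem_intv _ _

end M1

/-! ## Part 4: from two hanging sets to a semi-hybrid structure -/

theorem exists_pos (Z : Set A) {v b : A} (hv : v ∈ Z) (hb : b ∈ Z) (hvb : v ≠ b) :
    ∃ (pos : A → ℕ) (k : ℕ), 1 ≤ k ∧ pos v = 0 ∧ pos b = k ∧ (∀ z ∈ Z, pos z ≤ k) ∧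
      (∀ z ∈ Z, ∀ w ∈ Z, pos z = pos w → z = w) ∧ ∀ i ≤ k, ∃ z ∈ Z, pos z = i := by
  set M : Set A := Z \ {v, b} with hM
  let e := Fintype.equivFin M
  set m := Fintype.card M
  have hvM : v ∉ M := fun h => h.2 (Or.inl rfl)
  have hbM : b ∉ M := fun h => h.2 (Or.inr rfl)
  have hcov : ∀ z ∈ Z, z = v ∨ z = b ∨ z ∈ M := by
    intro z hz
    by_cases h1 : z = v
    · exact Or.inl h1
    by_cases h2 : z = b
    · exact Or.inr (Or.inl h2)
    refine Or.inr (Or.inr ⟨hz, ?_⟩)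
    rintro (h | h)
    · exact h1 h
    · exact h2 h
  let pos : A → ℕ := fun x => if x = v then 0 else if h : x ∈ M then (e ⟨x, h⟩).val + 1 else m + 1
  have p1 : pos v = 0 := by simp [pos]
  have p2 : pos b = m + 1 := by simp [pos, hbM, hvb.symm]
  have p3 : ∀ z (h : z ∈ M), pos z = (e ⟨z, h⟩).val + 1 := by
    intro z h
    have : z ≠ v := by rintro rfl; exact hvM h
    simp only [pos]
    rw [if_neg this, dif_pos h]
  have lt : ∀ z (h : z ∈ M), (e ⟨z, h⟩).val < m := fun z h => (e ⟨z, h⟩).isLt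
  refine ⟨pos, m + 1, by omega, p1, p2, ?_, ?_, ?_⟩
  · intro z hz
    rcases hcov z hz with rfl | rfl | h
    · omega
    · omega
    · have := lt z h; rw [p3 z h]; omega
  · intro z hz w hw hzw
    rcases hcov z hz with rfl | rfl | h <;> rcases hcov w hw with rfl | rfl | h'
    · rfl
    · omega
    · rw [p3 w h'] at hzw; omega
    · omega
    · rfl
    · have := lt w h'; rw [p3 w h'] at hzw; omega
    · rw [p3 z h] at hzw; omega
    · have := lt z h; rw [p3 z h] at hzw; omega
    · rw [p3 z h, p3 w h'] at hzw
      have := e.injective (Fin.ext (by omega : (e ⟨z, h⟩).val = (e ⟨w, h'⟩).val))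
      exact congrArg Subtype.val this
  · intro i hi
    rcases Nat.eq_zero_or_pos i with h | h
    · exact ⟨v, hv, by omega⟩
    by_cases h' : i = m + 1
    · exact ⟨b, hb, by omega⟩
    · let y := e.symm ⟨i - 1, by omega⟩
      refine ⟨y.1, y.2.1, ?_⟩
      rw [p3 y.1 y.2]
      simp [y]; omega

section pack
variable {D : Set (Pref A)} {T : SimpleGraph A} {S : Set A} {v n : A}

theorem sub_cut (h : Hang D S v)
    (hE : ∀ x ∈ S, x ≠ v → ∀ y, T.Adj x y ↔ (adjGraph D).Adj x y) {U : Set A} {s t : A}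
    (hU : Cut (adjGraph D) U s t) (hUS : U ⊆ S) (hv : v ∉ U) : Cut T U s t := by
  have hne : ∀ x ∈ U, x ≠ v := by rintro x hx rfl; exact hv hx
  refine ⟨hU.1, hU.2.1, (hE s (hUS hU.1) (hne s hU.1) t).2 hU.2.2.1, ?_⟩
  intro x hx y hy e
  exact hU.2.2.2 x hx y hy ((hE x (hUS hx) (hne x hx) y).1 e)

theorem sub_edge_cut (hc : (adjGraph D).Connected) (h : Hang D S v)
    (hE : ∀ x ∈ S, x ≠ v → ∀ y, T.Adj x y ↔ (adjGraph D).Adj x y) {s t : A}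
    (hs : s ∈ S) (hne : s ≠ v) (e : T.Adj s t) : ∃ U, Cut T U s t := by
  have e' := (hE s hs hne t).1 e
  by_cases hd : (adjGraph D).dist t v ≤ (adjGraph D).dist s v
  · obtain ⟨U, hA, hUS, hv⟩ := arc_of_edge hc h hs hne e' hd
    exact ⟨U, sub_cut h hE hA.1 hUS hv⟩
  · have hne' : t ≠ v := by
      rintro rfl
      rw [SimpleGraph.dist_self] at hd
      omega
    obtain ⟨U, hA, hUS, hv⟩ := arc_of_edge hc h (hang_edge h hs hne e') hne' e'.symm (by omega)
    exact ⟨Uᶜ, (sub_cut h hE hA.1 hUS hv).compl⟩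

theorem sub_reach (hc : (adjGraph D).Connected) (h : Hang D S v)
    (hE : ∀ x ∈ S, x ≠ v → ∀ y, T.Adj x y ↔ (adjGraph D).Adj x y) :
    ∀ (k : ℕ) (x : A), (adjGraph D).dist x v = k → x ∈ S → T.Reachable x v := by
  intro k
  induction k with
  | zero =>
    intro x hx _
    rw [hc.dist_eq_zero_iff] at hx
    subst hx; exact SimpleGraph.Reachable.refl _
  | succ k ih =>
    intro x hd hx
    have hne : x ≠ v := by rintro rfl; rw [SimpleGraph.dist_self] at hd; omega
    obtain ⟨U, t, ht, hA, hUS, hv⟩ := h.2.1 x hx hne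
    have := cut_dist hc hA.1 hA.1.1 hv
    rw [SimpleGraph.dist_self] at this
    exact ((hE x hx hne t).2 hA.1.2.2.1).reachable.trans (ih t (by omega) ht)

theorem sub_side (hT : T.IsTree) (hS : Cut T S v n) {b : A} (hb : b ∉ S) :
    sideSet T v b = S := by
  have hc := hT.connected
  ext z
  constructor
  · intro hz
    exact (intv_cut_mp hc hz hS hS.1).resolve_right hb
  · intro hz
    have h1 := cut_dist hc hS hz hb
    have h2 := cut_dist hc hS hS.1 hb
    rw [SimpleGraph.dist_self] at h2
    change T.dist z v + T.dist v b = T.dist z b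
    omega

theorem sub_ssp (hT : T.IsTree) (h : Hang D S v)
    (hE : ∀ x ∈ S, x ≠ v → ∀ y, T.Adj x y ↔ (adjGraph D).Adj x y)
    (hS : Cut T S v n) {P : Pref A} (hP : P ∈ D) (hp : peak P ∈ S) (hpv : peak P ≠ v) :
    SemiSP T v P := by
  have hc := hT.connected
  refine (ssp_cut hT).2 fun U s t hU hv hpU => ?_
  have hsi : s ∈ intv T (peak P) v := by
    have h1 := cut_dist hc hU hpU hv
    have h2 := cut_dist hc hU hU.1 hv
    rw [SimpleGraph.dist_self] at h2
    rw [mem_intv]; omega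
  have hsS : s ∈ S := by
    by_contra hsn
    rcases intv_cut_mp hc hsi hS.compl hsn with h' | h'
    · exact h' hp
    · exact h' hS.1
  have hne : s ≠ v := by rintro rfl; exact hv hU.1
  obtain ⟨U0, t0, ht0, hA, hUS, hv0⟩ := h.2.1 s hsS hne
  have hU0 := sub_cut h hE hA.1 hUS hv0
  have htU0 : t ∉ U0 := by
    intro htU
    have h1 := cut_dist hc hU0 htU hv0
    have h2 := cut_dist hc hU hU.1 hv
    have h3 := cut_dist hc hU0 hU0.1 hv0
    rw [SimpleGraph.dist_self] at h2 h3
    omega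
  obtain ⟨-, rfl⟩ := hU0.2.2.2 s hU0.1 t htU0 hU.2.2.1
  have : U = U0 := by
    ext x; rw [cut_mem_iff hc hU, cut_mem_iff hc hU0]
  subst this
  exact hA.2 P hP hpU

end pack

section M2
variable {D : Set (Pref A)}

/-- M2 -/
theorem sh_of_hang {S S' : Set A} {v b : A} (hG : (adjGraph D).Connected)
    (hS : Hang D S v) (hS' : Hang D S' b) (hdis : Disjoint S S') :
    ∃ T : SimpleGraph A, T.IsTree ∧ DualThresholds T v b ∧ D ⊆ {P | SemiHybridPref T v b P} ∧
      intv T v b = zone S S' v b := by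
  rw [Set.disjoint_left] at hdis
  have hvb : v ≠ b := by rintro rfl; exact hdis hS.1 hS'.1
  have hbS : b ∉ S := fun h => hdis h hS'.1
  have hvS' : v ∉ S' := fun h => hdis hS.1 h
  set Z := zone S S' v b with hZ
  have hvZ : v ∈ Z := Or.inr (Or.inl rfl)
  have hbZ : b ∈ Z := Or.inr (Or.inr rfl)
  have hSZ : ∀ x ∈ S, x ∈ Z → x = v := by
    rintro x hx (h | h | h)
    · exact absurd (Or.inl hx) h
    · exact h
    · exact absurd hx (h ▸ hbS)
  have hSZ' : ∀ x ∈ S', x ∈ Z → x = b := by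
    rintro x hx (h | h | h)
    · exact absurd (Or.inr hx) h
    · exact absurd hx (h ▸ hvS')
    · exact h
  have hcov : ∀ x, x ∉ Z → (x ∈ S ∧ x ≠ v) ∨ (x ∈ S' ∧ x ≠ b) := by
    intro x hx
    by_cases h1 : x ∈ S
    · exact Or.inl ⟨h1, by rintro rfl; exact hx hvZ⟩
    by_cases h2 : x ∈ S'
    · exact Or.inr ⟨h2, by rintro rfl; exact hx hbZ⟩
    exact absurd (Or.inl (by rintro (h | h); exacts [h1 h, h2 h])) hx
  obtain ⟨pos, k, hk, pv, pb, ple, pinj, psurj⟩ := exists_pos Z hvZ hbZ hvb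
  let T : SimpleGraph A :=
    { Adj := fun x y => ((adjGraph D).Adj x y ∧ (x ∉ Z ∨ y ∉ Z)) ∨
        (x ∈ Z ∧ y ∈ Z ∧ (pos x + 1 = pos y ∨ pos y + 1 = pos x))
      symm := ⟨by
        rintro x y (⟨h, h'⟩ | ⟨h1, h2, h3⟩)
        · exact Or.inl ⟨h.symm, h'.symm⟩
        · exact Or.inr ⟨h2, h1, h3.symm⟩⟩
      loopless := ⟨by
        rintro x (⟨h, -⟩ | ⟨-, -, h⟩)
        · exact h.ne rfl
        · omega⟩ }
  have hTadj : ∀ x y, T.Adj x y ↔ (((adjGraph D).Adj x y ∧ (x ∉ Z ∨ y ∉ Z)) ∨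
        (x ∈ Z ∧ y ∈ Z ∧ (pos x + 1 = pos y ∨ pos y + 1 = pos x))) := fun _ _ => Iff.rfl
  have hEo : ∀ x, x ∉ Z → ∀ y, T.Adj x y ↔ (adjGraph D).Adj x y := by
    intro x hx y
    rw [hTadj]
    constructor
    · rintro (h | h)
      · exact h.1
      · exact absurd h.1 hx
    · intro h; exact Or.inl ⟨h, Or.inl hx⟩
  have hE : ∀ x ∈ S, x ≠ v → ∀ y, T.Adj x y ↔ (adjGraph D).Adj x y :=
    fun x hx hne => hEo x fun h => hne (hSZ x hx h)
  have hE' : ∀ x ∈ S', x ≠ b → ∀ y, T.Adj x y ↔ (adjGraph D).Adj x y :=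
    fun x hx hne => hEo x fun h => hne (hSZ' x hx h)
  let π : A → A := fun x => if x ∈ S then v else if x ∈ S' then b else x
  have πS : ∀ x ∈ S, π x = v := fun x hx => if_pos hx
  have πS' : ∀ x ∈ S', π x = b := by
    intro x hx
    simp only [π]
    rw [if_neg fun h => hdis h hx, if_pos hx]
  have πZ : ∀ x ∈ Z, π x = x := by
    intro x hx
    by_cases h1 : x ∈ S
    · rw [πS x h1, hSZ x h1 hx]
    by_cases h2 : x ∈ S'
    · rw [πS' x h2, hSZ' x h2 hx]
    simp only [π]
    rw [if_neg h1, if_neg h2]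
  have πo : ∀ x, x ∉ Z → ∀ y, (adjGraph D).Adj x y → π x = π y := by
    intro x hx y e
    rcases hcov x hx with ⟨h, h'⟩ | ⟨h, h'⟩
    · rw [πS x h, πS y (hang_edge hS h h' e)]
    · rw [πS' x h, πS' y (hang_edge hS' h h' e)]
  have πe : ∀ x y, T.Adj x y → π x = π y ∨ (x ∈ Z ∧ y ∈ Z ∧ π x = x ∧ π y = y ∧
      (pos x + 1 = pos y ∨ pos y + 1 = pos x)) := by
    intro x y e
    rw [hTadj] at e
    rcases e with ⟨e, h | h⟩ | ⟨h1, h2, h3⟩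
    · exact Or.inl (πo x h y e)
    · exact Or.inl (πo y h x e.symm).symm
    · exact Or.inr ⟨h1, h2, πZ x h1, πZ y h2, h3⟩
  -- line walks
  have reachZ : ∀ i, ∀ z ∈ Z, pos z = i → T.Reachable z v := by
    intro i
    induction i with
    | zero =>
      intro z hz hp
      rw [pinj z hz v hvZ (by omega)]
    | succ i ih =>
      intro z hz hp
      obtain ⟨w, hw, hpw⟩ := psurj i (by have := ple z hz; omega)
      have : T.Adj z w := Or.inr ⟨hz, hw, Or.inr (by omega)⟩
      exact this.reachable.trans (ih w hw hpw)
  have reach : ∀ x, T.Reachable x v := by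
    intro x
    by_cases hx : x ∈ Z
    · exact reachZ _ x hx rfl
    rcases hcov x hx with ⟨h, -⟩ | ⟨h, -⟩
    · exact sub_reach hG hS hE _ x rfl h
    · exact (sub_reach hG hS' hE' _ x rfl h).trans (reachZ _ b hbZ rfl)
  have hc : T.Connected := by
    have : Nonempty A := ⟨v⟩
    exact ⟨fun x y => (reach x).trans (reach y).symm⟩
  have lineCut : ∀ p ∈ Z, ∀ q ∈ Z, pos p + 1 = pos q → Cut T {x | pos (π x) ≤ pos p} p q := by
    intro p hp q hq hpq
    refine ⟨?_, ?_, Or.inr ⟨hp, hq, Or.inl hpq⟩, ?_⟩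
    · change pos (π p) ≤ pos p
      rw [πZ p hp]
    · change ¬ pos (π q) ≤ pos p
      rw [πZ q hq]; omega
    · intro x hx y hy e
      change pos (π x) ≤ pos p at hx
      change ¬ pos (π y) ≤ pos p at hy
      rcases πe x y e with h | ⟨h1, h2, h3, h4, h5⟩
      · rw [h] at hx; exact absurd hx hy
      · rw [h3] at hx; rw [h4] at hy
        exact ⟨pinj x h1 p hp (by omega), pinj y h2 q hq (by omega)⟩
  have hT : T.IsTree := by
    refine tree_of_cuts hc fun s t e => ?_
    have out : ∀ s t, s ∉ Z → T.Adj s t → ∃ U, Cut T U s t := by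
      intro s t hs e
      rcases hcov s hs with ⟨h, h'⟩ | ⟨h, h'⟩
      · exact sub_edge_cut hG hS hE h h' e
      · exact sub_edge_cut hG hS' hE' h h' e
    rcases (hTadj s t).1 e with ⟨e', h | h⟩ | ⟨h1, h2, h3 | h3⟩
    · exact out s t h e
    · obtain ⟨U, hU⟩ := out t s h e.symm
      exact ⟨Uᶜ, hU.compl⟩
    · exact ⟨_, lineCut s h1 t h2 h3⟩
    · exact ⟨_, (lineCut t h2 s h1 h3).compl⟩
  -- the two side cuts
  obtain ⟨n, hnZ, hn⟩ := psurj 1 hk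
  obtain ⟨n', hnZ', hn'⟩ := psurj (k - 1) (by omega)
  have cS : Cut T S v n := by
    refine ⟨hS.1, ?_, Or.inr ⟨hvZ, hnZ, Or.inl (by omega)⟩, ?_⟩
    · intro h; have := hSZ n h hnZ; rw [this] at hn; omega
    · intro x hx y hy e
      have hxv : x = v := by
        by_contra hne
        exact hy (hang_edge hS hx hne ((hE x hx hne y).1 e))
      refine ⟨hxv, ?_⟩
      rcases (hTadj x y).1 e with ⟨e', h | h⟩ | ⟨h1, h2, h3 | h3⟩
      · rw [hxv] at h; exact absurd hvZ h
      · rcases hcov y h with ⟨h, h'⟩ | ⟨h, h'⟩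
        · exact absurd h hy
        · exact absurd (hang_edge hS' h h' e'.symm) (hxv ▸ hvS')
      · rw [hxv] at h3; exact pinj y h2 n hnZ (by omega)
      · rw [hxv] at h3; omega
  have cS' : Cut T S' b n' := by
    refine ⟨hS'.1, ?_, Or.inr ⟨hbZ, hnZ', Or.inr (by omega)⟩, ?_⟩
    · intro h; have := hSZ' n' h hnZ'; rw [this] at hn'; omega
    · intro x hx y hy e
      have hxv : x = b := by
        by_contra hne
        exact hy (hang_edge hS' hx hne ((hE' x hx hne y).1 e))
      refine ⟨hxv, ?_⟩
      rcases (hTadj x y).1 e with ⟨e', h | h⟩ | ⟨h1, h2, h3 | h3⟩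
      · rw [hxv] at h; exact absurd hbZ h
      · rcases hcov y h with ⟨h, h'⟩ | ⟨h, h'⟩
        · exact absurd (hang_edge hS h h' e'.symm) (hxv ▸ hbS)
        · exact absurd h hy
      · have := ple y h2
        rw [hxv] at h3; omega
      · rw [hxv] at h3; exact pinj y h2 n' hnZ' (by omega)
  have side1 : sideSet T v b = S := sub_side hT cS hbS
  have side2 : sideSet T b v = S' := sub_side hT cS' hvS'
  -- the interval
  have lip : ∀ x y, pos (π y) ≤ pos (π x) + T.dist x y := by
    intro x y
    obtain ⟨p, hp⟩ := hc.exists_walk_length_eq_dist x y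
    rw [← hp]
    clear hp
    induction p with
    | nil => omega
    | @cons x z y e p ih =>
      rw [SimpleGraph.Walk.length_cons]
      rcases πe x z e with h | ⟨h1, h2, h3, h4, h5⟩
      · rw [h]; omega
      · rw [h3]; rw [h4] at ih; omega
  have up : ∀ m, ∀ z ∈ Z, ∀ w ∈ Z, pos w = pos z + m → T.dist z w ≤ m := by
    intro m
    induction m with
    | zero =>
      intro z hz w hw h
      rw [pinj w hw z hz h, SimpleGraph.dist_self]
    | succ m ih =>
      intro z hz w hw h
      obtain ⟨u, hu, hpu⟩ := psurj (pos z + m) (by have := ple w hw; omega)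
      have h1 := ih z hz u hu hpu
      have e : T.Adj w u := Or.inr ⟨hw, hu, Or.inr (by omega)⟩
      have h2 := adj_dist_le hc e z
      rw [T.dist_comm, T.dist_comm (u := u)] at h2
      omega
  have hintv : intv T v b = Z := by
    ext z
    constructor
    · intro hz
      by_contra hzZ
      have hz' : T.dist v z + T.dist z b = T.dist v b := hz
      have e1 := T.dist_comm (u := v) (v := z)
      have e2 := T.dist_comm (u := v) (v := b)
      rcases hcov z hzZ with ⟨h, h'⟩ | ⟨h, h'⟩
      · rw [← side1] at h
        have h1' : T.dist z v + T.dist v b = T.dist z b := h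
        exact h' (hc.dist_eq_zero_iff.1 (by omega))
      · rw [← side2] at h
        have h1' : T.dist z b + T.dist b v = T.dist z v := h
        exact h' (hc.dist_eq_zero_iff.1 (by omega))
    · intro hz
      have h1 := up (pos z) v hvZ z hz (by omega)
      have h2 := up (k - pos z) z hz b hbZ (by have := ple z hz; omega)
      have h3 := lip v b
      rw [πZ v hvZ, πZ b hbZ] at h3
      have h4 := hc.dist_triangle (u := v) (v := z) (w := b)
      have := ple z hz
      rw [mem_intv]; omega
  refine ⟨T, hT, ⟨hvb, ?_⟩, ?_, hintv⟩
  · intro c hcn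
    rw [hintv] at hcn
    have hs := projOn_spec hT v b c
    have hsZ : projOn T (intv T v b) c ∈ Z := hintv ▸ hs.1
    rcases hcov c hcn with ⟨h, -⟩ | ⟨h, -⟩
    · left
      refine hSZ _ ?_ hsZ
      by_contra hno
      rcases intv_cut_mp hc (hs.2 v (left_mem_intv _ _)) cS.compl hno with h' | h'
      · exact h' h
      · exact h' hS.1
    · right
      refine hSZ' _ ?_ hsZ
      by_contra hno
      rcases intv_cut_mp hc (hs.2 b (right_mem_intv _ _)) cS'.compl hno with h' | h'
      · exact h' h
      · exact h' hS'.1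
  · intro P hP
    change SemiHybridPref T v b P
    unfold SemiHybridPref
    rw [side1, side2, hintv]
    have top : ∀ {x : A} {B : Set A}, x ∈ B → peak P = x → IsBestOf P x B := by
      rintro x B hx rfl
      exact best_of_wk hx fun y _ => peak_wk _ _
    refine ⟨fun h => ⟨sub_ssp hT hS hE cS hP h.1 h.2, hS'.2.2 P hP (hdis h.1)⟩,
      fun h => ⟨sub_ssp hT hS' hE' cS' hP h.1 h.2, hS.2.2 P hP (fun h' => hdis h' h.1)⟩, ?_⟩
    intro h
    constructor
    · by_cases h1 : peak P ∈ S
      · exact top hS.1 (hSZ _ h1 h)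
      · exact hS.2.2 P hP h1
    · by_cases h1 : peak P ∈ S'
      · exact top hS'.1 (hSZ' _ h1 h)
      · exact hS'.2.2 P hP h1

end M2

/-! ## Part 5: the projection rule on a semi-single-peaked domain -/

section projrule
variable {T : SimpleGraph A}

theorem ssp_key (hT : T.IsTree) {xb : A} {P : Pref A} (h : SemiSP T xb P) {c d : A}
    (h1 : c ∈ intv T (peak P) xb) (h2 : c ∈ intv T (peak P) d) : wk P c d := by
  have hc := hT.connected
  by_cases hp : c = peak P
  · rw [hp]; exact peak_wk _ _
  · obtain ⟨s, e, hd⟩ := closer_nbr hc hp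
    obtain ⟨U, hU⟩ := tree_cut hT e.symm
    have hpU : peak P ∈ U := by
      rw [cut_mem_iff hc hU, T.dist_comm, T.dist_comm (v := c)]; omega
    have hxU : xb ∉ U := by
      rcases intv_cut_mp hc h1 hU.compl hU.2.1 with h' | h'
      · exact absurd hpU h'
      · exact h'
    have hdU : d ∉ U := by
      rcases intv_cut_mp hc h2 hU.compl hU.2.1 with h' | h'
      · exact absurd hpU h'
      · exact h'
    exact best_wk ((ssp_cut hT).1 h U s c hU hxU hpU) hdU

theorem intv_trans (hc : T.Connected) {x y z w : A} (h : z ∈ intv T x y) (h' : w ∈ intv T x z) :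
    w ∈ intv T x y := by
  rw [mem_intv] at *
  have h1 := hc.dist_triangle (u := w) (v := z) (w := y)
  have h2 := hc.dist_triangle (u := x) (v := w) (w := y)
  omega

/-- an element of `B` furthest away from `xb` -/
noncomputable def pickFar (T : SimpleGraph A) (xb : A) (B : Set A) : A :=
  if h : ∃ l, l ∈ B ∧ ∀ d ∈ B, T.dist xb d ≤ T.dist xb l then h.choose else xb

theorem pickFar_spec (T : SimpleGraph A) (xb : A) (B : Set A) (hx : xb ∈ B) :
    pickFar T xb B ∈ B ∧ ∀ d ∈ B, T.dist xb d ≤ T.dist xb (pickFar T xb B) := by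
  have h : ∃ l, l ∈ B ∧ ∀ d ∈ B, T.dist xb d ≤ T.dist xb l := by
    obtain ⟨l, hl, hm⟩ := Set.exists_max_image B (fun z => T.dist xb z) (Set.toFinite _) ⟨xb, hx⟩
    exact ⟨l, hl, hm⟩
  unfold pickFar
  rw [dif_pos h]
  exact h.choose_spec

theorem anon_of_ssp {D : Set (Pref A)} (hT : T.IsTree) {xb : A} (hD : ∀ P ∈ D, SemiSP T xb P)
    {n : ℕ} (hn : 2 ≤ n) : ∃ f : (Fin n → Pref A) → A,
        IsRule D f ∧ TopsOnly D f ∧ StrategyProof D f ∧ Anonymous D f := by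
  have hc := hT.connected
  let B : (Fin n → Pref A) → Set A := fun P => {z | ∀ i, z ∈ intv T xb (peak (P i))}
  have hxB : ∀ P, xb ∈ B P := fun P i => left_mem_intv _ _
  refine ⟨fun P => pickFar T xb (B P), ?_, ?_, ?_, ?_⟩
  · intro P hP a ha
    obtain ⟨h1, h2⟩ := pickFar_spec T xb (B P) (hxB P)
    have h3 := h2 a fun i => by rw [ha i]; exact right_mem_intv _ _
    have h4 := h1 ⟨0, by omega⟩
    rw [ha, mem_intv] at h4
    change pickFar T xb (B P) = a
    exact hc.dist_eq_zero_iff.1 (by omega)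
  · intro P P' hP hP' h
    have : B P = B P' := by
      ext z
      exact forall_congr' fun i => by rw [h i]
    change pickFar T xb (B P) = pickFar T xb (B P')
    rw [this]
  · intro P hP i Q hQ
    rw [← wk_iff]
    change wk (P i) (pickFar T xb (B P)) (pickFar T xb (B (Function.update P i Q)))
    obtain ⟨hl, hlm⟩ := pickFar_spec T xb (B P) (hxB P)
    obtain ⟨hd, -⟩ := pickFar_spec T xb (B (Function.update P i Q)) (hxB _)
    set l := pickFar T xb (B P)
    set d := pickFar T xb (B (Function.update P i Q))
    have hd' : ∀ j, j ≠ i → d ∈ intv T xb (peak (P j)) := by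
      intro j hj
      have := hd j
      rwa [Function.update_of_ne hj] at this
    obtain ⟨j, hj⟩ : ∃ j : Fin n, j ≠ i := by
      have : Nontrivial (Fin n) := Fin.nontrivial_iff_two_le.2 hn
      exact exists_ne i
    have hli := hl i
    have hssp := hD _ (hP i)
    refine ssp_key hT hssp (by rw [intv_comm]; exact hli) ?_
    by_cases hle : T.dist xb d ≤ T.dist xb l
    · have h1 := chain_intv hT (hl j) (hd' j hj) hle
      rw [mem_intv] at h1 hli ⊢
      have h2 := hc.dist_triangle (u := peak (P i)) (v := d) (w := xb)
      have h3 := hc.dist_triangle (u := peak (P i)) (v := l) (w := d)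
      have e1 := T.dist_comm (u := peak (P i)) (v := xb)
      have e2 := T.dist_comm (u := peak (P i)) (v := l)
      have e3 := T.dist_comm (u := d) (v := xb)
      have e4 := T.dist_comm (u := d) (v := l)
      omega
    · have h1 := chain_intv hT (hd' j hj) (hl j) (by omega)
      rw [intv_cut hT]
      intro U s t hU hlU
      by_contra hcon
      push Not at hcon
      have hxU := (intv_cut_mp hc h1 hU hlU).resolve_right hcon.2
      have ht1 := cut_t_intv hc hU hxU hcon.1
      have ht2 := cut_t_intv hc hU hxU hcon.2
      have ht : t ∈ B P := by
        intro j
        by_cases hji : j = i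
        · rw [hji]; exact ht1
        · exact intv_trans hc (hd' j hji) ht2
      have h3 := hlm t ht
      have h4 := cut_dist hc hU hlU hcon.2
      have h5 := cut_dist hc hU hxU hcon.2
      have h6 := cut_dist hc hU hxU hU.2.1
      rw [SimpleGraph.dist_self] at h6
      rw [mem_intv] at h1
      omega
  · intro P hP σ
    have : B (P ∘ σ) = B P := by
      ext z
      constructor
      · intro h i
        have := h (σ.symm i)
        simpa using this
      · intro h i; exact h (σ i)
    change pickFar T xb (B (P ∘ σ)) = pickFar T xb (B P)
    rw [this]

end projrule

/-! ## Part 6: from two voters to many -/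

/-- unanimity on profiles with a common peak in `Z` -/
def ZUnan (D : Set (Pref A)) (Z : Set A) {n : ℕ} (f : (Fin n → Pref A) → A) : Prop :=
  ∀ P : Fin n → Pref A, InDom D P → ∀ z ∈ Z, (∀ i, peak (P i) = z) → f P = z

section lemN
variable {D : Set (Pref A)} {n : ℕ} {f : (Fin n → Pref A) → A}

theorem group_dev (hf : StrategyProof D f) {P : Fin n → Pref A} (hP : InDom D P) {R Q : Pref A}
    (hQ : Q ∈ D) (X : Finset (Fin n)) (hX : ∀ j ∈ X, P j = R) :
    wk R (f P) (f fun j => if j ∈ X then Q else P j) := by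
  induction X using Finset.induction_on with
  | empty => simp [wk_refl]
  | insert i X hi ih =>
    refine wk_trans (ih fun j hj => hX j (Finset.mem_insert_of_mem hj)) ?_
    have h1 : InDom D fun j => if j ∈ X then Q else P j := by
      intro j
      by_cases h : j ∈ X
      · simp only [if_pos h]; exact hQ
      · simp only [if_neg h]; exact hP j
    have h2 := sp_wk hf h1 i hQ
    have h3 : (if i ∈ X then Q else P i) = R := by
      rw [if_neg hi]; exact hX i (Finset.mem_insert_self _ _)
    have h4 : (Function.update (fun j => if j ∈ X then Q else P j) i Q) =
        fun j => if j ∈ insert i X then Q else P j := by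
      funext j
      by_cases h : j = i
      · subst h; simp
      · rw [Function.update_of_ne h]; simp [h]
    rw [h4] at h2
    simp only [h3] at h2
    exact h2

theorem lemN (hr : MinimallyRich D) {Z : Set A} {z0 z1 : A} (hz0 : z0 ∈ Z) (hz1 : z1 ∈ Z)
    (hne : z0 ≠ z1) (tf : Prop)
    (h2 : ∀ g : (Fin 2 → Pref A) → A, StrategyProof D g → ZUnan D Z g → (tf → TopsOnly D g) →
      ∃ k : Fin 2, ∀ R, InDom D R → peak (R k) ∈ Z → g R = peak (R k))
    (hf : StrategyProof D f) (hu : ZUnan D Z f) (hto : tf → TopsOnly D f) :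
    ∃ i, ∀ P, InDom D P → peak (P i) ∈ Z → f P = peak (P i) := by
  obtain ⟨R0, hR0, hp0⟩ := hr z0
  obtain ⟨R1, hR1, hp1⟩ := hr z1
  let prof : Finset (Fin n) → Finset (Fin n) → Pref A → Pref A → Pref A → Fin n → Pref A :=
    fun X Y P Q Q0 j => if j ∈ X then P else if j ∈ Y then Q else Q0
  have profD : ∀ X Y P Q Q0, P ∈ D → Q ∈ D → Q0 ∈ D → InDom D (prof X Y P Q Q0) := by
    intro X Y P Q Q0 h1 h2 h3 j
    simp only [prof]
    split_ifs <;> assumption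
  have two : ∀ X Y Q0, Disjoint X Y → Q0 ∈ D →
      ZUnan D Z (fun R : Fin 2 → Pref A => f (prof X Y (R 0) (R 1) Q0)) →
      (∀ P Q, P ∈ D → Q ∈ D → peak P ∈ Z → f (prof X Y P Q Q0) = peak P) ∨
      (∀ P Q, P ∈ D → Q ∈ D → peak Q ∈ Z → f (prof X Y P Q Q0) = peak Q) := by
    intro X Y Q0 hXY hQ0 hun
    have hsp : StrategyProof D (fun R : Fin 2 → Pref A => f (prof X Y (R 0) (R 1) Q0)) := by
      intro R hR i Q hQ
      rw [← wk_iff]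
      fin_cases i
      · have := group_dev hf (profD X Y (R 0) (R 1) Q0 (hR 0) (hR 1) hQ0) (R := R 0) hQ X
          (fun j hj => by simp [prof, hj])
        have e : (fun j => if j ∈ X then Q else prof X Y (R 0) (R 1) Q0 j) =
            prof X Y Q (R 1) Q0 := by
          funext j; simp only [prof]; split_ifs <;> rfl
        rw [e] at this
        simpa using this
      · have := group_dev hf (profD X Y (R 0) (R 1) Q0 (hR 0) (hR 1) hQ0) (R := R 1) hQ Y
          (fun j hj => by
            have : j ∉ X := Finset.disjoint_right.1 hXY hj
            simp [prof, hj, this])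
        have e : (fun j => if j ∈ Y then Q else prof X Y (R 0) (R 1) Q0 j) =
            prof X Y (R 0) Q Q0 := by
          funext j; simp only [prof]
          by_cases hj : j ∈ Y
          · have : j ∉ X := Finset.disjoint_right.1 hXY hj
            simp [hj, this]
          · simp [hj]
        rw [e] at this
        simpa using this
    have hto' : tf → TopsOnly D (fun R : Fin 2 → Pref A => f (prof X Y (R 0) (R 1) Q0)) := by
      intro ht R R' hR hR' h
      refine hto ht _ _ (profD _ _ _ _ _ (hR 0) (hR 1) hQ0) (profD _ _ _ _ _ (hR' 0) (hR' 1) hQ0) ?_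
      intro j
      simp only [prof]
      split_ifs
      · exact h 0
      · exact h 1
      · rfl
    obtain ⟨k, hk⟩ := h2 _ hsp hun hto'
    fin_cases k
    · left
      intro P Q hP hQ hp
      have := hk ![P, Q] (by intro j; fin_cases j <;> simpa) (by simpa using hp)
      simpa using this
    · right
      intro P Q hP hQ hp
      have := hk ![P, Q] (by intro j; fin_cases j <;> simpa) (by simpa using hp)
      simpa using this
  let Win : Finset (Fin n) → Prop := fun S => ∀ P Q, P ∈ D → Q ∈ D → peak P ∈ Z →
    f (fun j => if j ∈ S then P else Q) = peak P
  have win_or : ∀ S, Win S ∨ Win Sᶜ := by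
    intro S
    have e : ∀ P Q, prof S Sᶜ P Q R0 = fun j => if j ∈ S then P else Q := by
      intro P Q; funext j; simp only [prof, Finset.mem_compl]
      by_cases hj : j ∈ S <;> simp [hj]
    have := two S Sᶜ R0 disjoint_compl_right hR0 (by
      intro R hR z hz hp
      refine hu _ (profD _ _ _ _ _ (hR 0) (hR 1) hR0) z hz ?_
      intro j
      rw [e]
      by_cases hj : j ∈ S
      · simp [hj, hp]
      · simp [hj, hp])
    rcases this with h | h
    · left; intro P Q hP hQ hp
      rw [← e]; exact h P Q hP hQ hp
    · right; intro P Q hP hQ hp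
      have e' : (fun j => if j ∈ Sᶜ then P else Q) = prof S Sᶜ Q P R0 := by
        rw [e]; funext j
        by_cases hj : j ∈ S <;> simp [hj]
      rw [e']; exact h Q P hQ hP hp
  have win_univ : Win Finset.univ := by
    intro P Q hP hQ hp
    exact hu _ (by intro j; simpa) _ hp (by intro j; simp)
  have win_empty : ¬ Win ∅ := by
    intro h
    have h1 := h R0 R1 hR0 hR1 (by rw [hp0]; exact hz0)
    have h2 := hu (fun j => if j ∈ (∅ : Finset (Fin n)) then R0 else R1) (by intro j; simpa) z1 hz1
      (by intro j; simpa)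
    rw [h1, hp0] at h2; exact hne h2
  obtain ⟨S, hSw, hSmin⟩ := Finset.exists_min_image (Finset.univ.filter Win) Finset.card
    ⟨Finset.univ, by simpa using win_univ⟩
  simp only [Finset.mem_filter, Finset.mem_univ, true_and] at hSw hSmin
  have hSne : S.Nonempty := by
    rw [Finset.nonempty_iff_ne_empty]; rintro rfl; exact win_empty hSw
  obtain ⟨i, hi⟩ := hSne
  have hSi : S = {i} := by
    by_contra hS
    have hpos : (S.erase i).Nonempty := by
      rw [Finset.nonempty_iff_ne_empty]
      intro h
      rw [Finset.erase_eq_empty_iff] at h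
      rcases h with h | h
      · rw [h] at hi; simp at hi
      · exact hS h
    have hcard := Finset.card_erase_of_mem hi
    have hcpos := Finset.card_pos.2 hpos
    have w1 : Win ({i} : Finset (Fin n))ᶜ := by
      refine (win_or {i}).resolve_left fun h => ?_
      have := hSmin _ h
      rw [Finset.card_singleton] at this
      omega
    have w2 : Win (S.erase i)ᶜ := by
      refine (win_or (S.erase i)).resolve_left fun h => ?_
      have := hSmin _ h
      omega
    have := two {i} (S.erase i) R0 (by simp) hR0 (by
      intro R hR z hz hp
      have h1 := group_dev hf (profD {i} (S.erase i) (R 0) (R 1) R0 (hR 0) (hR 1) hR0) (R := R 1)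
        (hR 0) (S.erase i) (fun j hj => by
          have : j ≠ i := (Finset.mem_erase.1 hj).1
          have h' := (Finset.mem_erase.1 hj).2
          simp [prof, this, h'])
      have e : (fun j => if j ∈ S.erase i then R 0 else prof {i} (S.erase i) (R 0) (R 1) R0 j) =
          fun j => if j ∈ S then R 0 else R0 := by
        funext j
        by_cases hji : j = i
        · subst hji; simp [prof, hi]
        · by_cases hj : j ∈ S <;> simp [prof, hji, hj]
      rw [e, hSw (R 0) R0 (hR 0) hR0 (by rw [hp]; exact hz), hp 0, ← hp 1] at h1
      rw [← hp 1]
      exact peak_eq_of_wk h1)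
    rcases this with h | h
    · have h1 := h R1 R0 hR1 hR0 (by rw [hp1]; exact hz1)
      have h2 := w1 R0 R1 hR0 hR1 (by rw [hp0]; exact hz0)
      have e : prof {i} (S.erase i) R1 R0 R0 = fun j => if j ∈ ({i} : Finset (Fin n))ᶜ then R0 else R1 := by
        funext j
        by_cases hji : j = i <;> simp [prof, hji]
      rw [e, h2, hp0, hp1] at h1; exact hne h1
    · have h1 := h R0 R1 hR0 hR1 (by rw [hp1]; exact hz1)
      have h2 := w2 R0 R1 hR0 hR1 (by rw [hp0]; exact hz0)
      have e : prof {i} (S.erase i) R0 R1 R0 = fun j => if j ∈ (S.erase i)ᶜ then R0 else R1 := by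
        funext j
        by_cases hji : j = i
        · simp [prof, hji]
        · by_cases hj : j ∈ S <;> simp [prof, hji, hj]
      rw [e, h2, hp0, hp1] at h1; exact hne h1
  rw [hSi] at hSw
  refine ⟨i, fun P hP hp => ?_⟩
  obtain ⟨Ry, hRy, hpy⟩ := hr (f P)
  have key : ∀ X : Finset (Fin n), f (fun j => if j ∈ X then Ry else P j) = f P := by
    intro X
    induction X using Finset.induction_on with
    | empty => simp
    | insert k X hk ih =>
      have h1 : InDom D fun j => if j ∈ insert k X then Ry else P j := by
        intro j
        by_cases h : j ∈ insert k X
        · simp only [if_pos h]; exact hRy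
        · simp only [if_neg h]; exact hP j
      have h2 := sp_wk hf h1 k (hP k)
      have h4 : (Function.update (fun j => if j ∈ insert k X then Ry else P j) k (P k)) =
          fun j => if j ∈ X then Ry else P j := by
        funext j
        by_cases h : j = k
        · subst h; simp [hk]
        · rw [Function.update_of_ne h]; simp [h]
      rw [h4, ih, ← hpy] at h2
      simp only [Finset.mem_insert_self, if_true] at h2
      rw [← hpy]
      exact peak_eq_of_wk h2
  have h1 := key (Finset.univ.erase i)
  have e : (fun j => if j ∈ Finset.univ.erase i then Ry else P j) =
      fun j => if j ∈ ({i} : Finset (Fin n)) then P i else Ry := by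
    funext j
    by_cases hji : j = i
    · subst hji; simp
    · simp [hji]
  rw [e, hSw _ _ (hP i) hRy hp] at h1
  exact h1.symm

end lemN

/-! ## Part 7: two-voter tops-only functions on the zone -/

/-- zone data -/
structure ZData (D : Set (Pref A)) (Sa Sb : Set A) (a b : A) : Prop where
  card3 : 3 ≤ Fintype.card A
  conn : (adjGraph D).Connected
  hangA : Hang D Sa a
  hangB : Hang D Sb b
  disj : Disjoint Sa Sb

/-- retraction on the zone -/
noncomputable def rho (Sa Sb : Set A) (a b : A) (x : A) : A :=
  if x ∈ Sa then a else if x ∈ Sb then b else x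

section zdata
variable {D : Set (Pref A)} {Sa Sb : Set A} {a b : A}

theorem ZData.ne (h : ZData D Sa Sb a b) : a ≠ b := by
  rintro rfl; exact Set.disjoint_left.1 h.disj h.hangA.1 h.hangB.1

theorem a_mem_zone : a ∈ zone Sa Sb a b := Or.inr (Or.inl rfl)
theorem b_mem_zone : b ∈ zone Sa Sb a b := Or.inr (Or.inr rfl)

theorem rho_A {x : A} (hx : x ∈ Sa) : rho Sa Sb a b x = a := if_pos hx

theorem ZData.rho_B (h : ZData D Sa Sb a b) {x : A} (hx : x ∈ Sb) : rho Sa Sb a b x = b := by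
  unfold rho
  rw [if_neg fun h' => Set.disjoint_left.1 h.disj h' hx, if_pos hx]

theorem ZData.zone_A (h : ZData D Sa Sb a b) {x : A} (hx : x ∈ Sa) (hz : x ∈ zone Sa Sb a b) :
    x = a := by
  rcases hz with hz | hz | hz
  · exact absurd (Or.inl hx) hz
  · exact hz
  · rw [hz] at hx; exact absurd h.hangB.1 (Set.disjoint_left.1 h.disj hx)

theorem ZData.zone_B (h : ZData D Sa Sb a b) {x : A} (hx : x ∈ Sb) (hz : x ∈ zone Sa Sb a b) :
    x = b := by
  rcases hz with hz | hz | hz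
  · exact absurd (Or.inr hx) hz
  · rw [hz] at hx; exact absurd hx (Set.disjoint_left.1 h.disj h.hangA.1)
  · exact hz

theorem ZData.rho_Z (h : ZData D Sa Sb a b) {x : A} (hz : x ∈ zone Sa Sb a b) :
    rho Sa Sb a b x = x := by
  by_cases h1 : x ∈ Sa
  · rw [rho_A h1, h.zone_A h1 hz]
  by_cases h2 : x ∈ Sb
  · rw [h.rho_B h2, h.zone_B h2 hz]
  unfold rho
  rw [if_neg h1, if_neg h2]

theorem rho_mem (x : A) : rho Sa Sb a b x ∈ zone Sa Sb a b := by
  unfold rho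
  split_ifs with h1 h2
  · exact a_mem_zone
  · exact b_mem_zone
  · left; rintro (h | h)
    · exact h1 h
    · exact h2 h

theorem ZData.cover (x : A) (hx : x ∉ zone Sa Sb a b) :
    (x ∈ Sa ∧ x ≠ a) ∨ (x ∈ Sb ∧ x ≠ b) := by
  by_cases h1 : x ∈ Sa
  · exact Or.inl ⟨h1, by rintro rfl; exact hx a_mem_zone⟩
  by_cases h2 : x ∈ Sb
  · exact Or.inr ⟨h2, by rintro rfl; exact hx b_mem_zone⟩
  exact absurd (Or.inl (by rintro (h | h); exacts [h1 h, h2 h])) hx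

theorem ZData.rho_out (h : ZData D Sa Sb a b) {x y : A} (hx : x ∉ zone Sa Sb a b)
    (e : (adjGraph D).Adj x y) : rho Sa Sb a b x = rho Sa Sb a b y := by
  rcases ZData.cover x hx with ⟨h1, h2⟩ | ⟨h1, h2⟩
  · rw [rho_A h1, rho_A (hang_edge h.hangA h1 h2 e)]
  · rw [h.rho_B h1, h.rho_B (hang_edge h.hangB h1 h2 e)]

theorem ZData.rho_edge (h : ZData D Sa Sb a b) {x y : A} (e : (adjGraph D).Adj x y) :
    rho Sa Sb a b x = rho Sa Sb a b y ∨ (x ∈ zone Sa Sb a b ∧ y ∈ zone Sa Sb a b) := by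
  by_cases hx : x ∈ zone Sa Sb a b
  · by_cases hy : y ∈ zone Sa Sb a b
    · exact Or.inr ⟨hx, hy⟩
    · exact Or.inl (h.rho_out hy e.symm).symm
  · exact Or.inl (h.rho_out hx e)

theorem ZData.rho_wk (h : ZData D Sa Sb a b) {P : Pref A} (hP : P ∈ D) {w : A}
    (hne : rho Sa Sb a b (peak P) ≠ rho Sa Sb a b w) : wk P (rho Sa Sb a b w) w := by
  by_cases h1 : w ∈ Sa
  · rw [rho_A h1] at hne ⊢
    exact best_wk (h.hangA.2.2 P hP fun h' => hne (rho_A h')) h1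
  by_cases h2 : w ∈ Sb
  · rw [h.rho_B h2] at hne ⊢
    exact best_wk (h.hangB.2.2 P hP fun h' => hne (h.rho_B h')) h2
  unfold rho
  rw [if_neg h1, if_neg h2]
  exact wk_refl _ _

theorem ZData.fiber (h : ZData D Sa Sb a b) {z : A} (hz : z ∈ zone Sa Sb a b) :
    Hang D {x | rho Sa Sb a b x = z} z := by
  by_cases h1 : z = a
  · have : {x | rho Sa Sb a b x = z} = Sa := by
      ext x
      constructor
      · intro hx
        change rho Sa Sb a b x = z at hx
        by_contra hxA
        unfold rho at hx
        rw [if_neg hxA] at hx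
        split_ifs at hx with hxB
        · exact h.ne (h1.symm.trans hx.symm)
        · rw [hx, h1] at hxA; exact hxA h.hangA.1
      · intro hx; exact (rho_A hx).trans h1.symm
    rw [this, h1]; exact h.hangA
  by_cases h2 : z = b
  · have : {x | rho Sa Sb a b x = z} = Sb := by
      ext x
      constructor
      · intro hx
        change rho Sa Sb a b x = z at hx
        by_contra hxB
        unfold rho at hx
        split_ifs at hx with hxA
        · exact h.ne (hx.trans h2)
        · rw [hx, h2] at hxB; exact hxB h.hangB.1
      · intro hx; exact (h.rho_B hx).trans h2.symm
    rw [this, h2]; exact h.hangB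
  · have : {x | rho Sa Sb a b x = z} = {z} := by
      ext x
      constructor
      · intro hx
        change rho Sa Sb a b x = z at hx
        unfold rho at hx
        split_ifs at hx with hxA hxB
        · exact absurd hx.symm h1
        · exact absurd hx.symm h2
        · exact hx
      · intro hx
        rw [Set.mem_singleton_iff] at hx
        rw [hx]; exact h.rho_Z hz
    rw [this]; exact hang_singleton z

end zdata

/-- hypotheses on a two-voter function of tops -/
structure FH (D : Set (Pref A)) (Z : Set A) (F : A → A → A) : Prop where
  h1 : ∀ P ∈ D, ∀ q r, wk P (F (peak P) q) (F r q)
  h2 : ∀ P ∈ D, ∀ q r, wk P (F q (peak P)) (F q r)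
  un : ∀ z ∈ Z, F z z = z

theorem FH.flip {D : Set (Pref A)} {Z : Set A} {F : A → A → A} (h : FH D Z F) :
    FH D Z (fun x y => F y x) := ⟨h.h2, h.h1, h.un⟩

/-- mixed edges -/
def Mx (D : Set (Pref A)) (Z : Set A) (F : A → A → A) (u v : A) : Prop :=
  u ∈ Z ∧ v ∈ Z ∧ (adjGraph D).Adj u v ∧ F u v = v ∧ F v u = v

theorem Mx.flip {D : Set (Pref A)} {Z : Set A} {F : A → A → A} {u v : A} (h : Mx D Z F u v) :
    Mx D Z (fun x y => F y x) u v := ⟨h.1, h.2.1, h.2.2.1, h.2.2.2.2, h.2.2.2.1⟩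

section fh
variable {D : Set (Pref A)} {Z : Set A} {F : A → A → A}

theorem FH.step (h : FH D Z F) (h3 : 3 ≤ Fintype.card A) {x y : A} (e : (adjGraph D).Adj x y)
    (q : A) : F x q = F y q ∨ (F x q = x ∧ F y q = y) := by
  obtain ⟨-, P, hP, P', hP', k1, k2, k3, k4, k5⟩ := adj_iff.1 e
  have w1 := h.h1 P hP q y
  have w2 := h.h1 P' hP' q x
  rw [k1] at w1; rw [k3] at w2
  exact adj_step h3 k1 k2 k3 k4 k5 w1 w2

theorem FH.edge (h : FH D Z F) (h3 : 3 ≤ Fintype.card A) {x y : A} (e : (adjGraph D).Adj x y)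
    (hy : y ∈ Z) : F x y = x ∨ F x y = y := by
  rcases h.step h3 e y with h' | h'
  · right; rw [h', h.un y hy]
  · exact Or.inl h'.1

theorem FH.f2 (h : FH D Z F) (h3 : 3 ≤ Fintype.card A) {x y z : A} (e : (adjGraph D).Adj x y)
    (e' : (adjGraph D).Adj y z) (hne : x ≠ z) (hz : z ∈ Z) (hxy : F x y = x) : F y z = y := by
  have h1 : F x z = x := by
    rcases h.flip.step h3 e' x with h' | h'
    · rw [← h', hxy]
    · rw [hxy] at h'; exact absurd h'.1 e.ne
  rcases h.step h3 e z with h' | h'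
  · rcases h.edge h3 e' hz with h'' | h''
    · exact h''
    · rw [h1, h''] at h'; exact absurd h' hne
  · exact h'.2

theorem Mx.back {u v c : A} (hM : Mx D Z F u v) (h : FH D Z F) (h3 : 3 ≤ Fintype.card A)
    (hcZ : c ∈ Z) (e : (adjGraph D).Adj c u) (hne : c ≠ v) : Mx D Z F c u := by
  have key : ∀ {F : A → A → A}, FH D Z F → F u v = v → F c u = u := by
    intro F h hF
    rcases h.edge h3 e hM.1 with h' | h'
    · have := h.f2 h3 e hM.2.2.1 hne hM.2.1 h'
      rw [hF] at this
      exact absurd this.symm hM.2.2.1.ne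
    · exact h'
  exact ⟨hcZ, hM.1, e, key h hM.2.2.2.1, key h.flip hM.2.2.2.2⟩

theorem Mx.dom {d e j : A} (hM : Mx D Z F d e) (h : FH D Z F) (h3 : 3 ≤ Fintype.card A)
    (hr : MinimallyRich D) (hj : F d j = d) : F e j = e := by
  rcases h.step h3 hM.2.2.1 j with h' | h'
  · rw [hj] at h'
    obtain ⟨P, hP, hp⟩ := hr d
    have := h.h2 P hP e j
    rw [hp, hM.2.2.2.2, ← h'] at this
    rw [← hp] at this
    have := peak_eq_of_wk this
    rw [hp] at this
    exact absurd this.symm hM.2.2.1.ne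
  · exact h'.2

theorem Mx.acyclic {x y : A} (hM : Mx D Z F x y) (h : FH D Z F) (h3 : 3 ≤ Fintype.card A)
    (hr : MinimallyRich D) (ht : Relation.ReflTransGen (Mx D Z F) y x) : False := by
  have : F x y = x := by
    have key : ∀ z, Relation.ReflTransGen (Mx D Z F) y z → F z y = z := by
      intro z hz
      induction hz with
      | refl => exact h.un y hM.2.1
      | tail _ hM' ih => exact hM'.dom h h3 hr ih
    exact key x ht
  rw [hM.2.2.2.1] at this
  exact hM.2.2.1.ne this.symm

end fh

section core
variable {D : Set (Pref A)} {Sa Sb : Set A} {a b : A} {F : A → A → A}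

/-- a mixed edge is a cut edge -/
theorem Mx.cut {u v : A} (hM : Mx D (zone Sa Sb a b) F u v) (hz : ZData D Sa Sb a b)
    (h : FH D (zone Sa Sb a b) F) :
    ∃ U, Cut (adjGraph D) U u v ∧ (∀ x, x ∈ U ↔ rho Sa Sb a b x ∈ U) ∧
      (∀ w ∈ U, w ∈ zone Sa Sb a b → Relation.ReflTransGen (Mx D (zone Sa Sb a b) F) w u ∧
        ∃ o, Mx D (zone Sa Sb a b) F w o ∧ ((w = u ∧ o = v) ∨ o ∈ U)) := by
  set Z := zone Sa Sb a b with hZ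
  have h3 := hz.card3
  have hr := rich_of_conn h3 hz.conn
  let K : SimpleGraph A :=
    { Adj := fun x y => (adjGraph D).Adj x y ∧ (x ∈ Z ∧ y ∈ Z) ∧ (x ≠ v ∧ y ≠ v)
      symm := ⟨fun x y e => ⟨e.1.symm, e.2.1.symm, e.2.2.symm⟩⟩
      loopless := ⟨fun x e => e.1.ne rfl⟩ }
  have hK : ∀ x y, K.Adj x y ↔ ((adjGraph D).Adj x y ∧ (x ∈ Z ∧ y ∈ Z) ∧ (x ≠ v ∧ y ≠ v)) :=
    fun _ _ => Iff.rfl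
  let UZ : Set A := {w | K.Reachable w u}
  have huU : u ∈ UZ := SimpleGraph.Reachable.refl _
  have hUZ : ∀ w ∈ UZ, w ∈ Z ∧ w ≠ v := by
    rintro w ⟨p⟩
    cases p with
    | nil => exact ⟨hM.1, hM.2.2.1.ne⟩
    | cons e _ => exact ⟨e.2.1.1, e.2.2.1⟩
  have path : ∀ w (p : K.Walk w u), p.IsPath → ∃ o, Mx D Z F w o ∧
      ((w = u ∧ o = v) ∨ (o ≠ v ∧ o ∈ p.support)) ∧ Relation.ReflTransGen (Mx D Z F) w u := by
    suffices H : ∀ w u' (p : K.Walk w u'), u' = u → p.IsPath → ∃ o, Mx D Z F w o ∧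
        ((w = u ∧ o = v) ∨ (o ≠ v ∧ o ∈ p.support)) ∧ Relation.ReflTransGen (Mx D Z F) w u from
      fun w p => H w u p rfl
    intro w u' p
    induction p with
    | nil => rintro rfl _; exact ⟨v, hM, Or.inl ⟨rfl, rfl⟩, Relation.ReflTransGen.refl⟩
    | @cons w w' u' e p ih =>
      intro hu hp
      rw [SimpleGraph.Walk.cons_isPath_iff] at hp
      obtain ⟨o, hMo, ho, hrt⟩ := ih hu hp.1
      have hwo : w ≠ o := by
        rcases ho with ⟨-, rfl⟩ | ⟨-, ho⟩
        · exact e.2.2.1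
        · rintro rfl; exact hp.2 ho
      have hM' := hMo.back h h3 e.2.1.1 e.1 hwo
      refine ⟨w', hM', Or.inr ⟨e.2.2.2, ?_⟩, Relation.ReflTransGen.head hM' hrt⟩
      rw [SimpleGraph.Walk.support_cons]
      exact List.mem_cons_of_mem _ p.start_mem_support
  have out : ∀ w ∈ UZ, ∃ o, Mx D Z F w o ∧ ((w = u ∧ o = v) ∨ (o ≠ v ∧ o ∈ UZ)) ∧
      Relation.ReflTransGen (Mx D Z F) w u := by
    rintro w ⟨p⟩
    obtain ⟨o, h1, h2, h4⟩ := path w p.toPath p.toPath.2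
    refine ⟨o, h1, h2.imp id fun h => ⟨h.1, ?_⟩, h4⟩
    exact ⟨(p.toPath : K.Walk w u).dropUntil o h.2⟩
  refine ⟨{x | rho Sa Sb a b x ∈ UZ}, ⟨?_, ?_, hM.2.2.1, ?_⟩, ?_, ?_⟩
  · change rho Sa Sb a b u ∈ UZ
    rw [hz.rho_Z hM.1]; exact huU
  · change ¬ rho Sa Sb a b v ∈ UZ
    rw [hz.rho_Z hM.2.1]; exact fun h => (hUZ v h).2 rfl
  · intro x hx y hy e
    change rho Sa Sb a b x ∈ UZ at hx
    change ¬ rho Sa Sb a b y ∈ UZ at hy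
    rcases hz.rho_edge e with h' | ⟨hxZ, hyZ⟩
    · rw [h'] at hx; exact absurd hx hy
    rw [hz.rho_Z hxZ] at hx
    rw [hz.rho_Z hyZ] at hy
    have hyv : y = v := by
      by_contra hyv
      apply hy
      have : K.Adj y x := ⟨e.symm, ⟨hyZ, hxZ⟩, ⟨hyv, (hUZ x hx).2⟩⟩
      exact this.reachable.trans hx
    refine ⟨?_, hyv⟩
    rw [hyv] at e
    obtain ⟨o, h1, h2, h4⟩ := out x hx
    rcases h2 with h2 | h2
    · exact h2.1
    · exfalso
      have hM' := h1.back h h3 hM.2.1 e.symm (Ne.symm h2.1)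
      exact hM.acyclic h h3 hr (Relation.ReflTransGen.head hM' h4)
  · intro x
    change rho Sa Sb a b x ∈ UZ ↔ rho Sa Sb a b (rho Sa Sb a b x) ∈ UZ
    rw [hz.rho_Z (rho_mem x)]
  · intro w hw hwZ
    change rho Sa Sb a b w ∈ UZ at hw
    rw [hz.rho_Z hwZ] at hw
    obtain ⟨o, h1, h2, h4⟩ := out w hw
    refine ⟨h4, o, h1, h2.imp id fun h => ?_⟩
    change rho Sa Sb a b o ∈ UZ
    rw [hz.rho_Z h1.2.1]; exact h.2

/-- values behind a mixed edge -/
theorem Mx.vals {u v : A} (hM : Mx D (zone Sa Sb a b) F u v) (h3 : 3 ≤ Fintype.card A)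
    (hc : (adjGraph D).Connected)
    (h : FH D (zone Sa Sb a b) F) {U : Set A} (hU : Cut (adjGraph D) U u v) :
    (∀ p ∈ U, F v p = v) ∧ ∀ w, w ∉ U → ∀ p ∈ U, F w p = F w v := by
  -- closer neighbours
  have inU : ∀ p ∈ U, p = u ∨ ∃ p' ∈ U, (adjGraph D).Adj p p' ∧
      (adjGraph D).dist p' v + 1 = (adjGraph D).dist p v := by
    intro p hp
    have hpv : p ≠ v := by rintro rfl; exact hU.2.1 hp
    obtain ⟨p', e, hd⟩ := closer_nbr hc hpv
    by_cases hp' : p' ∈ U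
    · exact Or.inr ⟨p', hp', e, hd⟩
    · exact Or.inl (hU.2.2.2 p hp p' hp' e).1
  have base : ∀ n, ∀ p ∈ U, (adjGraph D).dist p v = n → F v p = v := by
    intro n
    induction n with
    | zero =>
      intro p hp hd
      rw [hc.dist_eq_zero_iff] at hd
      rw [hd] at hp; exact absurd hp hU.2.1
    | succ n ih =>
      intro p hp hd
      rcases inU p hp with rfl | ⟨p', hp', e, hd'⟩
      · exact hM.2.2.2.2
      · have h1 := ih p' hp' (by omega)
        rcases h.flip.step h3 e v with h' | h'
        · rw [h', h1]
        · rw [h1] at h'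
          exact absurd hp' (h'.2 ▸ hU.2.1)
  have base' : ∀ p ∈ U, F v p = v := fun p hp => base _ p hp rfl
  have cl1 : ∀ n, ∀ w, w ∉ U → (adjGraph D).dist w v = n → ∀ p ∈ U, F w p ∉ U := by
    intro n
    induction n with
    | zero =>
      intro w hw hd p hp
      rw [hc.dist_eq_zero_iff] at hd
      rw [hd, base' p hp]; exact hU.2.1
    | succ n ih =>
      intro w hw hd p hp
      have hwv : w ≠ v := by rintro rfl; rw [SimpleGraph.dist_self] at hd; omega
      obtain ⟨w', e, hd'⟩ := closer_nbr hc hwv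
      have hw' : w' ∉ U := fun hw' => hwv (hU.2.2.2 w' hw' w hw e.symm).2
      have h1 := ih w' hw' (by omega) p hp
      rcases h.step h3 e p with h' | h'
      · rw [h']; exact h1
      · rw [h'.1]; exact hw
  refine ⟨base', fun w hw => ?_⟩
  have cl2 : ∀ n, ∀ p ∈ U, (adjGraph D).dist p v = n → F w p = F w v := by
    intro n
    induction n with
    | zero =>
      intro p hp hd
      rw [hc.dist_eq_zero_iff] at hd
      rw [hd] at hp; exact absurd hp hU.2.1
    | succ n ih =>
      intro p hp hd
      have hno := cl1 _ w hw rfl p hp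
      have st : ∀ p', (adjGraph D).Adj p p' → F w p = F w p' := by
        intro p' e
        rcases h.flip.step h3 e w with h' | h'
        · exact h'
        · rw [h'.1] at hno; exact absurd hp hno
      rcases inU p hp with rfl | ⟨p', hp', e, hd'⟩
      · exact st v hU.2.2.1
      · rw [st p' e]; exact ih p' hp' (by omega)
  exact fun p hp => cl2 _ p hp rfl

theorem Mx.arc {u v : A} (hM : Mx D (zone Sa Sb a b) F u v) (hz : ZData D Sa Sb a b)
    (h : FH D (zone Sa Sb a b) F) {U : Set A} (hU : Cut (adjGraph D) U u v)
    (hsat : ∀ x, x ∈ U ↔ rho Sa Sb a b x ∈ U) : Arc D U u v := by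
  refine ⟨hU, fun P hP hp => ?_⟩
  obtain ⟨v1, v2⟩ := hM.vals hz.card3 hz.conn h hU
  obtain ⟨v1', v2'⟩ := hM.flip.vals hz.card3 hz.conn h.flip hU
  have keyZ : ∀ w, w ∉ U → w ∈ zone Sa Sb a b → wk P v w := by
    intro w hw hwZ
    have h1 := h.h1 P hP v w
    rw [v1' _ hp, ← v2 w hw _ hp] at h1
    have h2 := h.h2 P hP w w
    rw [h.un w hwZ] at h2
    exact wk_trans h1 h2
  refine best_of_wk hU.2.1 fun w hw => ?_
  have hw' : rho Sa Sb a b w ∉ U := fun h' => hw ((hsat w).2 h')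
  refine wk_trans (keyZ _ hw' (rho_mem w)) (hz.rho_wk hP ?_)
  intro e
  exact hw' (e ▸ (hsat _).1 hp)

/-- a terminal mixed edge gives a hanging set -/
theorem Mx.hang {u v : A} (hM : Mx D (zone Sa Sb a b) F u v) (hz : ZData D Sa Sb a b)
    (h : FH D (zone Sa Sb a b) F) {U : Set A} (hU : Cut (adjGraph D) U u v)
    (hsat : ∀ x, x ∈ U ↔ rho Sa Sb a b x ∈ U)
    (hout : ∀ w ∈ U, w ∈ zone Sa Sb a b →
      Relation.ReflTransGen (Mx D (zone Sa Sb a b) F) w u ∧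
        ∃ o, Mx D (zone Sa Sb a b) F w o ∧ ((w = u ∧ o = v) ∨ o ∈ U))
    (hterm : ∀ y ∈ zone Sa Sb a b, (adjGraph D).Adj v y → F v y = v) :
    Hang D (U ∪ {v}) v := by
  have h3 := hz.card3
  have hc := hz.conn
  have hr := rich_of_conn h3 hc
  set Z := zone Sa Sb a b with hZ
  have hvZ := hM.2.1
  refine ⟨Or.inr rfl, ?_, ?_⟩
  · intro x hx hne
    have hxU : x ∈ U := hx.resolve_right hne
    by_cases hxZ : x ∈ Z
    · obtain ⟨-, o, hMo, ho⟩ := hout x hxU hxZ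
      obtain ⟨V, hV, hVsat, hVout⟩ := hMo.cut hz h
      have pred : ∀ y, Relation.ReflTransGen (Mx D Z F) y x → y ∈ U := by
        intro y hy
        induction hy using Relation.ReflTransGen.head_induction_on with
        | refl => exact hxU
        | head hMq _ ih =>
          by_contra hq
          obtain ⟨rfl, rfl⟩ := hU.2.2.2 _ ih _ hq hMq.2.2.1.symm
          have := hM.2.2.2.1
          rw [hMq.2.2.2.2] at this
          exact hM.2.2.1.ne this
      have hVU : V ⊆ U := by
        intro y hy
        rw [hsat]
        exact pred _ (hVout _ ((hVsat y).1 hy) (rho_mem y)).1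
      refine ⟨V, o, ?_, hMo.arc hz h hV hVsat, fun y hy => Or.inl (hVU hy),
        fun hv => hU.2.1 (hVU hv)⟩
      rcases ho with ⟨-, rfl⟩ | ho
      · exact Or.inr rfl
      · exact Or.inl ho
    · have hfib := hz.fiber (rho_mem (Sa := Sa) (Sb := Sb) (a := a) (b := b) x)
      have hsub : {y | rho Sa Sb a b y = rho Sa Sb a b x} ⊆ U := by
        intro y hy
        rw [hsat, show rho Sa Sb a b y = rho Sa Sb a b x from hy, ← hsat]; exact hxU
      obtain ⟨V, t, ht, hA, hVs, -⟩ := hfib.2.1 x rfl (by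
        intro e; exact hxZ (by rw [e]; exact rho_mem x))
      exact ⟨V, t, Or.inl (hsub ht), hA, fun y hy => Or.inl (hsub (hVs hy)),
        fun hv => hU.2.1 (hsub (hVs hv))⟩
  · intro P hP hp
    have hpU : peak P ∉ U := fun h => hp (Or.inl h)
    have hpv : peak P ≠ v := fun h => hp (Or.inr h)
    refine best_of_wk (Or.inr rfl) ?_
    rintro c (hcU | hcv)
    swap
    · rw [Set.mem_singleton_iff] at hcv; rw [hcv]; exact wk_refl _ _
    by_cases hrp : rho Sa Sb a b (peak P) = v
    · have hfib := hz.fiber hvZ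
      refine wk_of_prefers (hang_out hc hfib hP hrp hpv ?_)
      intro hc'
      have := (hsat c).1 hcU
      rw [show rho Sa Sb a b c = v from hc'] at this
      exact hU.2.1 this
    · have key : ∀ n, ∀ p, (adjGraph D).dist p v = n → (rho Sa Sb a b p ≠ v ∨ p = v) →
          F v p = v := by
        intro n
        induction n with
        | zero =>
          intro p hd _
          rw [hc.dist_eq_zero_iff] at hd
          rw [hd]; exact h.un v hvZ
        | succ n ih =>
          intro p hd hp'
          have hpv : p ≠ v := by rintro rfl; rw [SimpleGraph.dist_self] at hd; omega
          have hp' := hp'.resolve_right hpv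
          obtain ⟨p', e, hd'⟩ := closer_nbr hc hpv
          by_cases hp'v : p' = v
          · rw [hp'v] at e
            rcases hz.rho_edge e with h' | ⟨h1, -⟩
            · rw [hz.rho_Z hvZ] at h'; exact absurd h' hp'
            · exact hterm p h1 e.symm
          · have hrp' : rho Sa Sb a b p' ≠ v := by
              rcases hz.rho_edge e with h' | ⟨-, h2⟩
              · rw [← h']; exact hp'
              · rw [hz.rho_Z h2]; exact hp'v
            have h1 := ih p' (by omega) (Or.inl hrp')
            rcases h.flip.step h3 e v with h' | h'
            · rw [h', h1]
            · rw [h1] at h'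
              exact absurd h'.2.symm hp'v
      have hFv := key _ (peak P) rfl (Or.inl hrp)
      obtain ⟨-, v2'⟩ := hM.flip.vals h3 hc h.flip hU
      have keyZ : ∀ c ∈ U, c ∈ Z → wk P v c := by
        intro c hcU hcZ
        have h1 := h.h2 P hP c c
        rw [h.un c hcZ] at h1
        have h2 := v2' _ hpU c hcU
        rw [h2, hFv] at h1
        exact h1
      refine wk_trans (keyZ _ ((hsat c).1 hcU) (rho_mem c)) (hz.rho_wk hP ?_)
      intro e
      apply hpU
      rw [hsat, e, ← hsat]; exact hcU

end core

/-! ## Part 8: the two-voter core -/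

section core2
variable {D : Set (Pref A)} {Sa Sb : Set A} {a b : A} {F : A → A → A}

theorem ZData.znbr (hz : ZData D Sa Sb a b) {z : A} (hZ : z ∈ zone Sa Sb a b) :
    ∃ y ∈ zone Sa Sb a b, (adjGraph D).Adj z y := by
  obtain ⟨z2, h2, hne⟩ : ∃ z2 ∈ zone Sa Sb a b, z2 ≠ z := by
    by_cases h : a = z
    · exact ⟨b, b_mem_zone, fun h' => hz.ne (h.trans h'.symm)⟩
    · exact ⟨a, a_mem_zone, h⟩
  obtain ⟨p, hp, q, hq, e⟩ := exists_crossing hz.conn (U := {x | rho Sa Sb a b x = z})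
    (x := z) (y := z2) (hz.rho_Z hZ) (fun h => hne ((hz.rho_Z h2).symm.trans h))
  rcases hz.rho_edge e with h | ⟨h1, h2⟩
  · exact absurd (h.symm.trans hp) hq
  · have : p = z := (hz.rho_Z h1).symm.trans hp
    rw [this] at e
    exact ⟨q, h2, e⟩

theorem no_mx_dict (hz : ZData D Sa Sb a b) (h : FH D (zone Sa Sb a b) F)
    (hno : ∀ u v, ¬ Mx D (zone Sa Sb a b) F u v) {x0 y0 : A} (hx0 : x0 ∈ zone Sa Sb a b)
    (hy0 : y0 ∈ zone Sa Sb a b) (e0 : (adjGraph D).Adj x0 y0) (hF : F x0 y0 = x0) :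
    ∀ z ∈ zone Sa Sb a b, ∀ p, F z p = z := by
  have h3 := hz.card3
  have hc := hz.conn
  have key : ∀ x y, x ∈ zone Sa Sb a b → y ∈ zone Sa Sb a b → (adjGraph D).Adj x y → F x y = x →
      ∀ w ∈ zone Sa Sb a b, (adjGraph D).Adj y w → F y w = y := by
    intro x y hx hy e hxy w hw e'
    by_cases hwx : x = w
    · rw [← hwx]
      rcases h.edge h3 e.symm hx with h' | h'
      · exact h'
      · exact absurd ⟨hy, hx, e.symm, h', hxy⟩ (hno y x)
    · exact h.f2 h3 e e' hwx hw hxy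
  have Q : ∀ w, ∀ y ∈ zone Sa Sb a b, (adjGraph D).Adj (rho Sa Sb a b w) y →
      F (rho Sa Sb a b w) y = rho Sa Sb a b w := by
    intro w
    have := hc.preconnected y0 w
    rw [SimpleGraph.reachable_iff_reflTransGen] at this
    induction this with
    | refl => rw [hz.rho_Z hy0]; exact key x0 y0 hx0 hy0 e0 hF
    | @tail p q _ e ih =>
      rcases hz.rho_edge e with h' | ⟨h1, h2⟩
      · rw [← h']; exact ih
      · rw [hz.rho_Z h1] at ih
        rw [hz.rho_Z h2]
        exact key p q h1 h2 e (ih q h2 e)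
  have QZ : ∀ z ∈ zone Sa Sb a b, ∀ y ∈ zone Sa Sb a b, (adjGraph D).Adj z y → F z y = z := by
    intro z hZ
    have := Q z
    rwa [hz.rho_Z hZ] at this
  intro z hZ p
  induction hn : (adjGraph D).dist p z generalizing p with
  | zero =>
    rw [hc.dist_eq_zero_iff] at hn
    rw [hn]; exact h.un z hZ
  | succ n ih =>
    have hpz : p ≠ z := by rintro rfl; rw [SimpleGraph.dist_self] at hn; omega
    obtain ⟨p', e, hd⟩ := closer_nbr hc hpz
    have h1 := ih p' (by omega)
    rcases h.flip.step h3 e z with h' | ⟨-, h'⟩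
    · rw [h', h1]
    · rw [h1] at h'
      rw [← h'] at e
      by_cases hp : p ∈ zone Sa Sb a b
      · exact QZ z hZ p hp e.symm
      obtain ⟨z', hZ', e'⟩ := hz.znbr hZ
      have h2 := QZ z' hZ' z hZ e'.symm
      have h4 : F z' p = z' := by
        rcases h.flip.step h3 e z' with h5 | ⟨-, h5⟩
        · rw [h5, h2]
        · rw [h2] at h5; exact absurd h5 e'.ne'
      rcases h.step h3 e'.symm p with h5 | ⟨-, h5⟩
      · rcases h.flip.step h3 e z with h6 | ⟨h6, -⟩
        · rw [h6]; exact h.un z hZ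
        · rw [h4, h6] at h5
          rw [h5] at hZ'; exact absurd hZ' hp
      · exact h5

/-- the consequences of a terminal mixed edge -/
theorem no_terminal (hz : ZData D Sa Sb a b) (h : FH D (zone Sa Sb a b) F)
    (hmin : ∀ S v S' b', Hang D S v → Hang D S' b' → Disjoint S S' →
      ¬ zone S S' v b' ⊂ zone Sa Sb a b)
    (hiii : ∀ v, Hang D Set.univ v → IsLeafOn (adjGraph D) (zone Sa Sb a b) v → False)
    (hdiv : Diversity D) {u v : A} (hM : Mx D (zone Sa Sb a b) F u v)
    (hterm : ∀ y ∈ zone Sa Sb a b, (adjGraph D).Adj v y → F v y = v) : False := by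
  obtain ⟨U, hU, hsat, hout⟩ := hM.cut hz h
  have hH := hM.hang hz h hU hsat hout hterm
  have hc := hz.conn
  have hS1 : Hang D {x | rho Sa Sb a b x ∈ U ∨ rho Sa Sb a b x = v} v := by
    have := hang_union hH (hz.fiber hM.2.1)
    have e : {x | rho Sa Sb a b x ∈ U ∨ rho Sa Sb a b x = v} =
        (U ∪ {v}) ∪ {x | rho Sa Sb a b x = v} := by
      ext x
      simp only [Set.mem_ofPred_eq, Set.mem_union, Set.mem_singleton_iff, ← hsat]
      constructor
      · tauto
      · rintro ((h | rfl) | h)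
        · exact Or.inl h
        · exact Or.inr (hz.rho_Z hM.2.1)
        · exact Or.inr h
    rw [e]; exact this
  have huU : rho Sa Sb a b u ∈ U := (hsat u).1 hU.1
  have hrv : rho Sa Sb a b v = v := hz.rho_Z hM.2.1
  -- shrinking the zone
  have shrink : ∀ b' ∈ zone Sa Sb a b, b' ∉ U → b' ≠ v →
      (∀ x, x ∉ zone Sa Sb a b → rho Sa Sb a b x ∈ U ∨ rho Sa Sb a b x = v ∨
        rho Sa Sb a b x = b') → False := by
    intro b' hb' hbU hbv hcov
    refine hmin _ _ _ _ hS1 (hz.fiber hb') ?_ ⟨?_, ?_⟩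
    · rw [Set.disjoint_left]
      rintro x (hx | hx) hx'
      · rw [show rho Sa Sb a b x = b' from hx'] at hx; exact hbU hx
      · exact hbv (hx'.symm.trans hx)
    · rintro x (hx | rfl | hx)
      · by_contra hxZ
        apply hx
        rcases hcov x hxZ with h | h | h
        · exact Or.inl (Or.inl h)
        · exact Or.inl (Or.inr h)
        · exact Or.inr h
      · exact hM.2.1
      · rw [Set.mem_singleton_iff] at hx; rw [hx]; exact hb'
    · intro hsub
      rcases hsub hM.1 with hx | hx | hx
      · exact hx (Or.inl (Or.inl huU))
      · exact hM.2.2.1.ne hx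
      · rw [Set.mem_singleton_iff] at hx
        rw [← hx] at hbU; exact hbU hU.1
  have cov : ∀ x, x ∉ zone Sa Sb a b → rho Sa Sb a b x = a ∨ rho Sa Sb a b x = b := by
    intro x hx
    rcases ZData.cover x hx with h | h
    · exact Or.inl (rho_A h.1)
    · exact Or.inr (hz.rho_B h.1)
  by_cases ha : a ∈ U ∨ a = v
  · by_cases hb : b ∈ U ∨ b = v
    · by_cases hex : ∃ b' ∈ zone Sa Sb a b, b' ∉ U ∧ b' ≠ v
      · obtain ⟨b', h1, h2, h4⟩ := hex
        refine shrink b' h1 h2 h4 fun x hx => ?_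
        rcases cov x hx with h5 | h5 <;> rw [h5] <;> tauto
      · push Not at hex
        have huniv : {x | rho Sa Sb a b x ∈ U ∨ rho Sa Sb a b x = v} = Set.univ := by
          ext x
          simp only [Set.mem_ofPred_eq, Set.mem_univ, iff_true]
          by_cases h1 : rho Sa Sb a b x ∈ U
          · exact Or.inl h1
          · exact Or.inr (hex _ (rho_mem x) h1)
        rw [huniv] at hS1
        refine hiii v hS1 ⟨hM.2.1, u, ⟨hM.1, hM.2.2.1.symm⟩, ?_⟩
        rintro y ⟨hy, e⟩
        have hyU : y ∈ U := by
          by_contra hyU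
          exact e.ne' (hex y hy hyU)
        exact (hU.2.2.2 y hyU v hU.2.1 e.symm).1
    · push Not at hb
      refine shrink b b_mem_zone hb.1 hb.2 fun x hx => ?_
      rcases cov x hx with h5 | h5 <;> rw [h5] <;> tauto
  · push Not at ha
    by_cases hb : b ∈ U ∨ b = v
    · refine shrink a a_mem_zone ha.1 ha.2 fun x hx => ?_
      rcases cov x hx with h5 | h5 <;> rw [h5] <;> tauto
    push Not at hb
    by_cases hSa : ∀ x ∈ Sa, x = a
    · refine shrink b b_mem_zone hb.1 hb.2 fun x hx => ?_
      rcases ZData.cover x hx with h | h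
      · exact absurd (hSa x h.1) h.2
      · exact Or.inr (Or.inr (hz.rho_B h.1))
    by_cases hSb : ∀ x ∈ Sb, x = b
    · refine shrink a a_mem_zone ha.1 ha.2 fun x hx => ?_
      rcases ZData.cover x hx with h | h
      · exact Or.inr (Or.inr (rho_A h.1))
      · exact absurd (hSb x h.1) h.2
    push Not at hSa hSb
    obtain ⟨xa, hxa, hxa'⟩ := hSa
    obtain ⟨xb, hxb, hxb'⟩ := hSb
    obtain ⟨P, hP, P', hP', hrev⟩ := hdiv
    have one : ∀ {S : Set A} {r x : A}, Hang D S r → x ∈ S → x ≠ r → peak P ∈ S ∨ peak P' ∈ S := by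
      intro S r x hS hx hxr
      by_contra hcon
      push Not at hcon
      have h1 := (hS.2.2 P hP hcon.1).2 x hx hxr
      have h2 := (hS.2.2 P' hP' hcon.2).2 x hx hxr
      exact prefers_irrefl (prefers_trans h1 ((hrev x r).2 h2))
    have d1 : ∀ x, (rho Sa Sb a b x ∈ U ∨ rho Sa Sb a b x = v) → x ∈ Sa → False := by
      intro x hx hx'
      rw [rho_A hx'] at hx; tauto
    have d2 : ∀ x, (rho Sa Sb a b x ∈ U ∨ rho Sa Sb a b x = v) → x ∈ Sb → False := by
      intro x hx hx'
      rw [hz.rho_B hx'] at hx; tauto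
    have d3 : ∀ x, x ∈ Sa → x ∈ Sb → False := fun x h1 h2 => Set.disjoint_left.1 hz.disj h1 h2
    have o1 := one hS1 (x := u) (Or.inl huU) hM.2.2.1.ne
    have o2 := one hz.hangA hxa hxa'
    have o3 := one hz.hangB hxb hxb'
    rcases o1 with o1 | o1 <;> rcases o2 with o2 | o2 <;> rcases o3 with o3 | o3 <;>
      first
      | exact d1 _ o1 o2
      | exact d2 _ o1 o3
      | exact d3 _ o2 o3

theorem core2 (hz : ZData D Sa Sb a b) (h : FH D (zone Sa Sb a b) F)
    (hmin : ∀ S v S' b', Hang D S v → Hang D S' b' → Disjoint S S' →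
      ¬ zone S S' v b' ⊂ zone Sa Sb a b)
    (hiii : ∀ v, Hang D Set.univ v → IsLeafOn (adjGraph D) (zone Sa Sb a b) v → False)
    (hdiv : Diversity D) :
    (∀ z ∈ zone Sa Sb a b, ∀ p, F z p = z) ∨ (∀ z ∈ zone Sa Sb a b, ∀ p, F p z = z) := by
  have h3 := hz.card3
  have hr := rich_of_conn h3 hz.conn
  have hno : ∀ u v, ¬ Mx D (zone Sa Sb a b) F u v := by
    by_contra hcon
    push Not at hcon
    obtain ⟨u0, v0, hM0⟩ := hcon
    let R : A → A → Prop := fun x y => Relation.TransGen (Mx D (zone Sa Sb a b) F) y x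
    have hirr : ∀ x, ¬ R x x := by
      intro x hx
      obtain ⟨y, h1, h2⟩ := Relation.TransGen.head'_iff.1 hx
      exact h1.acyclic h h3 hr h2
    have : Std.Irrefl R := ⟨hirr⟩
    have : IsTrans A R := ⟨fun x y z h1 h2 => Relation.TransGen.trans h2 h1⟩
    have wf : WellFounded R := Finite.wellFounded_of_trans_of_irrefl R
    obtain ⟨v, ⟨u, hM⟩, hv⟩ := wf.has_min {v | ∃ u, Mx D (zone Sa Sb a b) F u v} ⟨v0, u0, hM0⟩
    have hterm : ∀ w, ¬ Mx D (zone Sa Sb a b) F v w := fun w hw =>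
      hv w ⟨v, hw⟩ (Relation.TransGen.single hw)
    by_cases hA : ∀ y ∈ zone Sa Sb a b, (adjGraph D).Adj v y → F v y = v
    · exact no_terminal hz h hmin hiii hdiv hM hA
    by_cases hB : ∀ y ∈ zone Sa Sb a b, (adjGraph D).Adj v y → F y v = v
    · exact no_terminal hz h.flip hmin hiii hdiv hM.flip hB
    push Not at hA hB
    obtain ⟨y, hy, e, hFy⟩ := hA
    obtain ⟨y', hy', e', hFy'⟩ := hB
    have h1 : F v y = y := (h.edge h3 e hy).resolve_left hFy
    have h2 : F y' v = y' := (h.edge h3 e'.symm hM.2.1).resolve_right hFy'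
    have hne : y' ≠ y := by
      rintro rfl
      exact hterm y' ⟨hM.2.1, hy, e, h1, h2⟩
    exact hFy (h.f2 h3 e'.symm e hne hy h2)
  obtain ⟨y, hy, e⟩ := hz.znbr (a_mem_zone (Sa := Sa) (Sb := Sb) (a := a) (b := b))
  rcases h.edge h3 e hy with h1 | h1
  · exact Or.inl (no_mx_dict hz h hno a_mem_zone hy e h1)
  · right
    exact no_mx_dict hz h.flip (fun u v hM => hno u v hM.flip) hy a_mem_zone e.symm h1

end core2

/-! ## Part 9: domains without unique seconds are dictatorial -/

/-- a strategy-proof unanimous two-voter function -/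
structure FG (D : Set (Pref A)) (f : Pref A → Pref A → A) : Prop where
  h1 : ∀ P ∈ D, ∀ Q ∈ D, ∀ R ∈ D, wk P (f P Q) (f R Q)
  h2 : ∀ P ∈ D, ∀ Q ∈ D, ∀ R ∈ D, wk Q (f P Q) (f P R)
  un : ∀ P ∈ D, ∀ Q ∈ D, peak P = peak Q → f P Q = peak P

theorem FG.flip {D : Set (Pref A)} {f : Pref A → Pref A → A} (h : FG D f) :
    FG D (fun P Q => f Q P) :=
  ⟨fun P hP Q hQ R hR => h.h2 Q hQ P hP R hR, fun P hP Q hQ R hR => h.h1 Q hQ P hP R hR,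
    fun P hP Q hQ e => (h.un Q hQ P hP e.symm).trans e.symm⟩

/-- `f` takes the value `c` whenever the tops are `a` and `b` -/
def Val (D : Set (Pref A)) (f : Pref A → Pref A → A) (a b c : A) : Prop :=
  ∀ P ∈ D, ∀ Q ∈ D, peak P = a → peak Q = b → f P Q = c

/-- mutual seconds -/
def Mut (D : Set (Pref A)) (a b : A) : Prop := b ∈ secondsSet D a ∧ a ∈ secondsSet D b

/-- mixed mutual pairs -/
def Mst (D : Set (Pref A)) (f : Pref A → Pref A → A) (u v : A) : Prop :=
  Mut D u v ∧ Val D f u v v ∧ Val D f v u v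

/-- mixed adjacent pairs -/
def Mg (D : Set (Pref A)) (f : Pref A → Pref A → A) (u v : A) : Prop :=
  (adjGraph D).Adj u v ∧ Val D f u v v ∧ Val D f v u v

section fg
variable {D : Set (Pref A)} {f : Pref A → Pref A → A}

theorem Val.flip {a b c : A} (h : Val D f a b c) : Val D (fun P Q => f Q P) b a c :=
  fun P hP Q hQ h1 h2 => h Q hQ P hP h2 h1

theorem Val.uniq (hr : MinimallyRich D) {a b c c' : A} (h : Val D f a b c)
    (h' : Val D f a b c') : c = c' := by
  obtain ⟨P, hP, hp⟩ := hr a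
  obtain ⟨Q, hQ, hq⟩ := hr b
  rw [← h P hP Q hQ hp hq, h' P hP Q hQ hp hq]

theorem adj_mut {a b : A} (e : (adjGraph D).Adj a b) : Mut D a b :=
  ⟨adj_pref e, adj_pref e.symm⟩

theorem Mut.symm {a b : A} (h : Mut D a b) : Mut D b a := ⟨h.2, h.1⟩

theorem Mut.ne (h3 : 3 ≤ Fintype.card A) {a b : A} (h : Mut D a b) : a ≠ b := by
  obtain ⟨⟨P, hP, h1, h2⟩, -⟩ := h
  rintro rfl
  exact second_ne_peak h3 P (h2.trans h1.symm)

theorem FG.f1_aux (h : FG D f) (h3 : 3 ≤ Fintype.card A) {a b : A} {P0 Q0 : Pref A}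
    (hP0 : P0 ∈ D) (hp1 : peak P0 = a) (hp2 : second P0 = b)
    (hQ0 : Q0 ∈ D) (hq1 : peak Q0 = b) (hq2 : second Q0 = a) (hv : f P0 Q0 = a) :
    Val D f a b a := by
  intro P hP Q hQ hp hq
  have hab : a ≠ b := by
    rintro rfl; exact second_ne_peak h3 P0 (hp2.trans hp1.symm)
  have s1 : f P0 Q = a := by
    have w1 := h.h1 P0 hP0 Q hQ Q0 hQ0
    rw [h.un Q0 hQ0 Q hQ (hq1.trans hq.symm), hq1, ← hp2] at w1
    rcases wk_second h3 w1 with h' | h'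
    · rw [h', hp1]
    · have w2 := h.h2 P0 hP0 Q0 hQ0 Q hQ
      rw [h', hv, hp2, ← hq1] at w2
      have := peak_eq_of_wk w2
      exact absurd (this.trans hq1) hab
  have w3 := h.h1 P hP Q hQ P0 hP0
  rw [s1, ← hp] at w3
  rw [peak_eq_of_wk w3, hp]

theorem FG.f1 (h : FG D f) (h3 : 3 ≤ Fintype.card A) {a b : A} (e : Mut D a b) :
    Val D f a b a ∨ Val D f a b b := by
  obtain ⟨⟨P0, hP0, hp1, hp2⟩, Q0, hQ0, hq1, hq2⟩ := e
  have w1 := h.h1 P0 hP0 Q0 hQ0 Q0 hQ0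
  rw [h.un Q0 hQ0 Q0 hQ0 rfl, hq1, ← hp2] at w1
  rcases wk_second h3 w1 with h' | h'
  · exact Or.inl (h.f1_aux h3 hP0 hp1 hp2 hQ0 hq1 hq2 (h'.trans hp1))
  · right
    exact (h.flip.f1_aux h3 hQ0 hq1 hq2 hP0 hp1 hp2 (h'.trans hp2)).flip

/-- moving the second voter along an edge -/
theorem FG.step2 (h : FG D f) (h3 : 3 ≤ Fintype.card A) {y z : A} (e : (adjGraph D).Adj y z) :
    ∃ Q ∈ D, ∃ Q' ∈ D, peak Q = y ∧ peak Q' = z ∧ ∀ P ∈ D,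
      f P Q = f P Q' ∨ (f P Q = y ∧ f P Q' = z) := by
  obtain ⟨-, Q, hQ, Q', hQ', k1, k2, k3, k4, k5⟩ := adj_iff.1 e
  refine ⟨Q, hQ, Q', hQ', k1, k3, fun P hP => ?_⟩
  exact adj_step h3 k1 k2 k3 k4 k5 (h.h2 P hP Q hQ Q' hQ') (h.h2 P hP Q' hQ' Q hQ)

theorem FG.f2 (h : FG D f) (h3 : 3 ≤ Fintype.card A) {x y z : A} (e : (adjGraph D).Adj x y)
    (e' : (adjGraph D).Adj y z) (hne : x ≠ z) (hxy : Val D f x y x) : Val D f y z y := by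
  obtain ⟨Q, hQ, Q', hQ', hq, hq', hs⟩ := h.step2 h3 e'
  obtain ⟨P, hP, P', hP', hp, hp', hs'⟩ := h.flip.step2 h3 e
  have h1 : f P Q' = x := by
    have h0 := hxy P hP Q hQ hp hq
    rcases hs P hP with h' | h'
    · rw [← h', h0]
    · rw [h0] at h'; exact absurd h'.1 e.ne
  rcases h.f1 h3 (adj_mut e') with h' | h'
  · exact h'
  · have h2 := h' P' hP' Q' hQ' hp' hq'
    rcases hs' Q' hQ' with h'' | h''
    · rw [h1, h2] at h''; exact absurd h'' hne
    · rw [h2] at h''; exact absurd h''.2 e'.ne'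

theorem Mg.flip {u v : A} (h : Mg D f u v) : Mg D (fun P Q => f Q P) u v :=
  ⟨h.1, h.2.2.flip, h.2.1.flip⟩

theorem Mg.mst {u v : A} (h : Mg D f u v) : Mst D f u v := ⟨adj_mut h.1, h.2⟩

theorem Mg.back {u v c : A} (hM : Mg D f u v) (h : FG D f) (h3 : 3 ≤ Fintype.card A)
    (hr : MinimallyRich D) (e : (adjGraph D).Adj c u) (hne : c ≠ v) : Mg D f c u := by
  have key : ∀ {f : Pref A → Pref A → A}, FG D f → Val D f u v v → Val D f c u u := by
    intro f h hF
    rcases h.f1 h3 (adj_mut e) with h' | h'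
    · exact absurd ((h.f2 h3 e hM.1 hne h').uniq hr hF) hM.1.ne
    · exact h'
  exact ⟨e, key h hM.2.1, (key h.flip hM.2.2.flip).flip⟩

theorem FG.dom (h : FG D f) (h3 : 3 ≤ Fintype.card A) (hr : MinimallyRich D) {d e j : A}
    (hE : Mut D d e) (hed : Val D f e d e) (hj : Val D f d j d) : Val D f e j e := by
  intro P' hP' Q hQ hp' hq
  obtain ⟨P, hP, hp, hps⟩ := hE.2
  obtain ⟨R, hR, hRp⟩ := hr d
  have s : f P Q = e := by
    have w := h.h1 P hP Q hQ R hR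
    rw [hj R hR Q hQ hRp hq, ← hps] at w
    rcases wk_second h3 w with h' | h'
    · exact h'.trans hp
    · have w2 := h.h2 P hP R hR Q hQ
      rw [hed P hP R hR hp hRp, h', hps, ← hRp] at w2
      exact absurd ((peak_eq_of_wk w2).trans hRp) (hE.ne h3).symm
  have w := h.h1 P' hP' Q hQ P hP
  rw [s, ← hp'] at w
  rw [peak_eq_of_wk w, hp']

theorem FG.val_self (h : FG D f) (j : A) : Val D f j j j := by
  intro P hP Q hQ hp hq
  rw [h.un P hP Q hQ (hp.trans hq.symm), hp]

theorem Mst.acyclic {x y : A} (hM : Mst D f x y) (h : FG D f) (h3 : 3 ≤ Fintype.card A)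
    (hr : MinimallyRich D) (ht : Relation.ReflTransGen (Mst D f) y x) : False := by
  have key : ∀ z, Relation.ReflTransGen (Mst D f) y z → Val D f z y z := by
    intro z hz
    induction hz with
    | refl => exact h.val_self y
    | tail _ hM' ih => exact h.dom h3 hr hM'.1 hM'.2.2 ih
  exact hM.1.ne h3 ((key x ht).uniq hr hM.2.1)

theorem no_mg (h : FG D f) (h3 : 3 ≤ Fintype.card A) (hc : (adjGraph D).Connected)
    (hls : LeafSymmetry D) (hus : ¬ UniqueSeconds D) (u v : A) : ¬ Mg D f u v := by
  intro hM0
  have hr := rich_of_conn h3 hc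
  let R : A → A → Prop := Relation.TransGen (Mst D f)
  have hirr : ∀ x, ¬ R x x := by
    intro x hx
    obtain ⟨y, h1, h2⟩ := Relation.TransGen.head'_iff.1 hx
    exact h1.acyclic h h3 hr h2
  have : Std.Irrefl R := ⟨hirr⟩
  have : IsTrans A R := ⟨fun x y z h1 h2 => Relation.TransGen.trans h1 h2⟩
  have wf : WellFounded R := Finite.wellFounded_of_trans_of_irrefl R
  obtain ⟨x, ⟨y, hM⟩, hx⟩ := wf.has_min {u | ∃ v, Mg D f u v} ⟨u, v, hM0⟩
  have hleaf : ∃! y, (adjGraph D).Adj x y := by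
    refine ⟨y, hM.1, fun c e => ?_⟩
    by_contra hcy
    have hb := hM.back h h3 hr e.symm hcy
    exact hx c ⟨x, hb⟩ (Relation.TransGen.single hb.mst)
  obtain ⟨z, hz1, hz2, hz3⟩ := hls x hleaf (by
    refine ⟨y, adj_pref hM.1, ?_⟩
    by_contra hcon
    push Not at hcon
    apply hus
    refine ⟨x, y, ?_⟩
    ext w
    constructor
    · intro hw; exact (hcon w hw).symm
    · intro hw; rw [Set.mem_singleton_iff] at hw; rw [hw]; exact adj_pref hM.1)
  have hE : Mut D x z := ⟨hz1, hz3⟩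
  have hxz := hE.ne h3
  have hzy : z ≠ y := by rintro rfl; exact hz2 hM.1
  -- first step
  have st1 : ∀ {f : Pref A → Pref A → A}, FG D f → Val D f x y y → Val D f z x x := by
    intro f h hxy
    rcases h.f1 h3 hE.symm with h' | h'
    swap
    · exact h'
    exfalso
    obtain ⟨Q, hQ, Q', hQ', hq, hq', hs⟩ := h.step2 h3 hM.1
    obtain ⟨P, hP, hp, hps⟩ := hz1
    obtain ⟨Pz, hPz, hpz⟩ := hr z
    have a1 := h' Pz hPz Q hQ hpz hq
    have a2 : f Pz Q' = z := by
      rcases hs Pz hPz with h'' | h''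
      · rw [← h'', a1]
      · rw [a1] at h''; exact absurd h''.1.symm hxz
    have w := h.h1 P hP Q' hQ' Pz hPz
    rw [hxy P hP Q' hQ' hp hq', a2, ← hps] at w
    rcases wk_second h3 w with h'' | h''
    · exact hM.1.ne (hp.symm.trans h''.symm)
    · exact hzy (hps.symm.trans h''.symm)
  have hzx : Val D f z x x := st1 h hM.2.1
  have hxz' : Val D f x z x := (st1 h.flip hM.2.2.flip).flip
  have hMzx : Mst D f z x := ⟨hE.symm, hzx, hxz'⟩
  -- second step
  have st2 : ∀ {f : Pref A → Pref A → A}, FG D f → Val D f x z x → ∀ w, (adjGraph D).Adj w z →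
      Val D f z w z := by
    intro f h hv w e
    rcases h.f1 h3 (adj_mut e.symm) with h' | h'
    · exact h'
    exfalso
    obtain ⟨Q, hQ, Q', hQ', hq, hq', hs⟩ := h.step2 h3 e.symm
    obtain ⟨P, hP, hp, hps⟩ := hz3
    obtain ⟨Px, hPx, hpx⟩ := hr x
    have a1 := hv Px hPx Q hQ hpx hq
    have a2 : f Px Q' = x := by
      rcases hs Px hPx with h'' | h''
      · rw [← h'', a1]
      · rw [a1] at h''; exact absurd h''.1 hxz
    have w1 := h.h1 P hP Q' hQ' Px hPx
    rw [h' P hP Q' hQ' hp hq', a2, ← hps] at w1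
    rcases wk_second h3 w1 with h'' | h''
    · exact e.ne (h''.trans hp)
    · rw [h'', hps] at e; exact hz2 e
  have hMw : ∀ w, (adjGraph D).Adj w z → Mg D f w z := fun w e =>
    ⟨e, (st2 h.flip hzx.flip w e).flip, st2 h hxz' w e⟩
  -- back propagation
  have bp : ∀ n, ∀ w w', Mg D f w w' → (adjGraph D).dist w x = n →
      (adjGraph D).dist w' x = n + 1 → Relation.ReflTransGen (Mst D f) w' z →
      Relation.ReflTransGen (Mst D f) x z := by
    intro n
    induction n with
    | zero =>
      intro w w' hw hd hd' ht
      rw [hc.dist_eq_zero_iff] at hd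
      rw [hd] at hw
      exact Relation.ReflTransGen.head hw.mst ht
    | succ n ih =>
      intro w w' hw hd hd' ht
      have hwx : w ≠ x := by rintro rfl; rw [SimpleGraph.dist_self] at hd; omega
      obtain ⟨c, e, hdc⟩ := closer_nbr hc hwx
      refine ih c w (hw.back h h3 hr e.symm ?_) (by omega) hd
        (Relation.ReflTransGen.head hw.mst ht)
      rintro rfl; omega
  obtain ⟨w, e, hd⟩ := closer_nbr hc hxz.symm
  exact hMzx.acyclic h h3 hr
    (bp _ w z (hMw w e.symm) rfl hd.symm Relation.ReflTransGen.refl)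

theorem no_mg_dict (h : FG D f) (h3 : 3 ≤ Fintype.card A) (hc : (adjGraph D).Connected)
    (hno : ∀ u v, ¬ Mg D f u v) {x0 y0 : A} (e0 : (adjGraph D).Adj x0 y0)
    (h0 : Val D f x0 y0 x0) : ∀ d j, Val D f d j d := by
  have hr := rich_of_conn h3 hc
  have key : ∀ x y, (adjGraph D).Adj x y → Val D f x y x →
      ∀ w, (adjGraph D).Adj y w → Val D f y w y := by
    intro x y e hxy w e'
    by_cases hwx : x = w
    · rw [← hwx]
      rcases h.f1 h3 (adj_mut e.symm) with h' | h'
      · exact h'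
      · exact absurd ⟨e.symm, h', hxy⟩ (hno y x)
    · exact h.f2 h3 e e' hwx hxy
  have Q : ∀ y w, (adjGraph D).Adj y w → Val D f y w y := by
    intro y
    have := hc.preconnected y0 y
    rw [SimpleGraph.reachable_iff_reflTransGen] at this
    induction this with
    | refl => exact key x0 y0 e0 h0
    | @tail p q _ e ih => exact key p q e (ih q e)
  intro d j
  have := hc.preconnected j d
  rw [SimpleGraph.reachable_iff_reflTransGen] at this
  induction this with
  | refl => exact h.val_self j
  | @tail p q _ e ih => exact h.dom h3 hr (adj_mut e) (Q q p e.symm) ih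

end fg

theorem fin2_eta (R : Fin 2 → Pref A) : R = ![R 0, R 1] := by
  funext i; fin_cases i <;> rfl

theorem upd0 (P Q R : Pref A) : Function.update ![P, Q] 0 R = ![R, Q] := by
  funext i; fin_cases i <;> simp

theorem upd1 (P Q R : Pref A) : Function.update ![P, Q] 1 R = ![P, R] := by
  funext i; fin_cases i <;> simp

theorem inDom2 {D : Set (Pref A)} {P Q : Pref A} (hP : P ∈ D) (hQ : Q ∈ D) : InDom D ![P, Q] := by
  intro i; fin_cases i
  · exact hP
  · exact hQ

theorem sp2 {D : Set (Pref A)} {g : (Fin 2 → Pref A) → A} (hg : StrategyProof D g) :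
    (∀ P ∈ D, ∀ Q ∈ D, ∀ R ∈ D, wk P (g ![P, Q]) (g ![R, Q])) ∧
    (∀ P ∈ D, ∀ Q ∈ D, ∀ R ∈ D, wk Q (g ![P, Q]) (g ![P, R])) := by
  constructor
  · intro P hP Q hQ R hR
    have := sp_wk hg (inDom2 hP hQ) 0 hR
    rw [upd0] at this; exact this
  · intro P hP Q hQ R hR
    have := sp_wk hg (inDom2 hP hQ) 1 hR
    rw [upd1] at this; exact this

theorem dictatorial_of_not_unique {D : Set (Pref A)} (h3 : 3 ≤ Fintype.card A)
    (huni : Unidimensional D) (hus : ¬ UniqueSeconds D) : DictatorialDomain D := by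
  obtain ⟨hc, -, hls⟩ := huni
  have hc : (adjGraph D).Connected := hc
  have hr := rich_of_conn h3 hc
  intro n hn f hf hsp
  obtain ⟨x, y, hxy⟩ : ∃ x y : A, x ≠ y := Fintype.exists_pair_of_one_lt_card (by omega)
  obtain ⟨i, hi⟩ := lemN (f := f) hr (Z := Set.univ) (Set.mem_univ x) (Set.mem_univ y) hxy False
    (by
      intro g hg hu _
      obtain ⟨s1, s2⟩ := sp2 hg
      have hFG : FG D (fun P Q => g ![P, Q]) := by
        refine ⟨s1, s2, fun P hP Q hQ e => hu _ (inDom2 hP hQ) _ trivial ?_⟩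
        intro i; fin_cases i
        · rfl
        · exact e.symm
      obtain ⟨y, e⟩ := exists_nbr hc (by omega) x
      rcases hFG.f1 h3 (adj_mut e) with h' | h'
      · refine ⟨0, fun R hR _ => ?_⟩
        rw [fin2_eta R]
        exact no_mg_dict hFG h3 hc (no_mg hFG h3 hc hls hus) e h' _ _ (R 0) (hR 0) (R 1) (hR 1)
          rfl rfl
      · refine ⟨1, fun R hR _ => ?_⟩
        rw [fin2_eta R]
        exact no_mg_dict hFG.flip h3 hc (no_mg hFG.flip h3 hc hls hus) e.symm h'.flip _ _ (R 1)
          (hR 1) (R 0) (hR 0) rfl rfl)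
    hsp (fun P hP z _ hz => hf P hP z hz) False.elim
  exact ⟨i, fun P hP _ => hi P hP trivial⟩

/-! ## Part 10: assembly -/

theorem core_rule {D : Set (Pref A)} (h3 : 3 ≤ Fintype.card A) (hdiv : Diversity D)
    {T : SimpleGraph A} {a b : A} (hsd : SemiHybridDomainOn D T a b) {n : ℕ}
    {f : (Fin n → Pref A) → A} (hf : IsRule D f) (hto : TopsOnly D f) (hsp : StrategyProof D f) :
    ∃ i, ∀ P, InDom D P → peak (P i) ∈ intv T a b → f P = peak (P i) := by
  obtain ⟨hT, hdt, hsh, hc, hmin, hiii⟩ := hsd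
  have hr := rich_of_conn h3 hc
  have hA := hang_of_sh h3 hT hdt (fun P hP => hsh hP) hc
  have hB := hang_of_sh h3 hT (dual_symm hdt) (fun P hP => sh_symm (hsh hP)) hc
  have hz : ZData D (sideSet T a b) (sideSet T b a) a b :=
    ⟨h3, hc, hA, hB, side_disj hT hdt.1⟩
  rw [intv_eq_zone hT hdt] at hmin hiii ⊢
  refine lemN hr (z0 := a) (z1 := b) a_mem_zone b_mem_zone hdt.1 True ?_ hsp
    (fun P hP z _ hz => hf P hP z hz) (fun _ => hto)
  intro g hg hu hgt
  have hgt := hgt trivial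
  choose R hRD hRp using hr
  obtain ⟨s1, s2⟩ := sp2 hg
  have top : ∀ P ∈ D, ∀ Q ∈ D, g ![P, Q] = g ![R (peak P), R (peak Q)] := by
    intro P hP Q hQ
    refine hgt _ _ (inDom2 hP hQ) (inDom2 (hRD _) (hRD _)) ?_
    intro i; fin_cases i
    · exact (hRp _).symm
    · exact (hRp _).symm
  have hFH : FH D (zone (sideSet T a b) (sideSet T b a) a b) (fun x y => g ![R x, R y]) := by
    refine ⟨?_, ?_, ?_⟩
    · intro P hP q r
      have := s1 P hP (R q) (hRD q) (R r) (hRD r)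
      rw [top P hP (R q) (hRD q), hRp] at this
      exact this
    · intro P hP q r
      have := s2 (R q) (hRD q) P hP (R r) (hRD r)
      rw [top (R q) (hRD q) P hP, hRp] at this
      exact this
    · intro z hzZ
      refine hu _ (inDom2 (hRD _) (hRD _)) z hzZ ?_
      intro i; fin_cases i
      · exact hRp _
      · exact hRp _
  have hcore := core2 hz hFH (by
      intro S v S' b' hS hS' hdis hlt
      obtain ⟨T', hT', hdt', hsh', he⟩ := sh_of_hang hc hS hS' hdis
      exact hmin ⟨T', v, b', hT', hdt', hsh', by rw [he]; exact hlt⟩) (by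
      intro v hv hleaf
      obtain ⟨hGT, hssp⟩ := hang_univ hc hv
      obtain ⟨P, hP, hPn⟩ := hiii hGT v hleaf
      exact hPn (hssp P hP)) hdiv
  rcases hcore with h' | h'
  · refine ⟨0, fun P hP hp => ?_⟩
    rw [fin2_eta P, top _ (hP 0) _ (hP 1)]
    exact h' _ hp _
  · refine ⟨1, fun P hP hp => ?_⟩
    rw [fin2_eta P, top _ (hP 0) _ (hP 1)]
    exact h' _ hp _

theorem sh_exists {D : Set (Pref A)} (h3 : 3 ≤ Fintype.card A) (hc : (adjGraph D).Connected)
    (hno : (adjGraph D).IsTree → ∀ x, ∃ P ∈ D, ¬ SemiSP (adjGraph D) x P) :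
    SemiHybridDomain D := by
  let p : ℕ → Prop := fun k => ∃ (T : SimpleGraph A) (a b : A), T.IsTree ∧ DualThresholds T a b ∧
      D ⊆ {P | SemiHybridPref T a b P} ∧ (intv T a b).ncard = k
  have hex : ∃ k, p k := by
    obtain ⟨x, y, hxy⟩ : ∃ x y : A, x ≠ y := Fintype.exists_pair_of_one_lt_card (by omega)
    obtain ⟨T, h1, h2, h4, -⟩ := sh_of_hang (D := D) hc (hang_singleton x) (hang_singleton y)
      (by rw [Set.disjoint_singleton]; exact hxy)
    exact ⟨_, T, x, y, h1, h2, h4, rfl⟩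
  obtain ⟨T, a, b, h1, h2, h4, h5⟩ := Nat.find_spec hex
  refine ⟨T, a, b, h1, h2, h4, hc, ?_, fun hT x _ => hno hT x⟩
  rintro ⟨T', a', b', k1, k2, k3, k4⟩
  have hlt := Set.ncard_lt_ncard k4 (Set.toFinite _)
  rw [h5] at hlt
  exact Nat.find_min hex hlt ⟨T', a', b', k1, k2, k3, rfl⟩

theorem not_anon_of_dict {D : Set (Pref A)} (hr : MinimallyRich D) {n : ℕ} (hn : 2 ≤ n)
    {Z : Set A} {a b : A} (ha : a ∈ Z) (hb : b ∈ Z) (hab : a ≠ b) {f : (Fin n → Pref A) → A}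
    (hd : ∃ i, ∀ P, InDom D P → peak (P i) ∈ Z → f P = peak (P i)) (han : Anonymous D f) :
    False := by
  obtain ⟨i, hi⟩ := hd
  obtain ⟨P, hP, hp⟩ := hr a
  obtain ⟨Q, hQ, hq⟩ := hr b
  have : Nontrivial (Fin n) := Fin.nontrivial_iff_two_le.2 hn
  obtain ⟨j, hj⟩ := exists_ne i
  let X : Fin n → Pref A := Function.update (fun _ => Q) i P
  have hX : InDom D X := by
    intro k
    by_cases hk : k = i
    · rw [hk]; simp [X, hP]
    · simp [X, hk, hQ]
  have e1 : X i = P := by simp [X]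
  have e2 : (X ∘ Equiv.swap i j) i = Q := by simp [X, hj]
  have k1 := hi X hX (by rw [e1, hp]; exact ha)
  have k2 := hi (X ∘ Equiv.swap i j) (fun k => hX _) (by rw [e2, hq]; exact hb)
  rw [han X hX, k1, e1, e2, hp, hq] at k2
  exact hab k2

/-- on a non-dictatorial, unidimensional domain and for any fixed
`n ≥ 2`, there is no anonymous, tops-only and strategy-proof rule iff the domain
is a semi-hybrid domain satisfying the unique seconds property; moreover on an
`(a,b)`-semi-hybrid domain without such a rule, every tops-only and
strategy-proof rule behaves like a dictatorship on the free zone. -/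
theorem stmt6_no_anonymous_iff_semihybrid (D : Set (Pref A)) (hD : D.Nonempty)
    (hcard : 3 ≤ Fintype.card A) (huni : Unidimensional D)
    (hnd : ¬ DictatorialDomain D) (n : ℕ) (hn : 2 ≤ n) :
    ((¬ ∃ f : (Fin n → Pref A) → A,
        IsRule D f ∧ TopsOnly D f ∧ StrategyProof D f ∧ Anonymous D f) ↔
      (SemiHybridDomain D ∧ UniqueSeconds D)) ∧
    (∀ (T : SimpleGraph A) (a b : A), SemiHybridDomainOn D T a b →
      (¬ ∃ f : (Fin n → Pref A) → A,
        IsRule D f ∧ TopsOnly D f ∧ StrategyProof D f ∧ Anonymous D f) →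
      ∀ f : (Fin n → Pref A) → A, IsRule D f → TopsOnly D f → StrategyProof D f →
        DictatorOn D f (intv T a b)) := by
  have hc : (adjGraph D).Connected := huni.1
  have hr := rich_of_conn hcard hc
  refine ⟨⟨fun hno => ⟨sh_exists hcard hc ?_, ?_⟩, ?_⟩, ?_⟩
  · intro hT x
    by_contra hcon
    push Not at hcon
    exact hno (anon_of_ssp hT hcon hn)
  · by_contra hus
    exact hnd (dictatorial_of_not_unique hcard huni hus)
  · rintro ⟨⟨T, a, b, hsd⟩, -⟩ ⟨f, h1, h2, h3, h4⟩
    exact not_anon_of_dict hr hn (left_mem_intv a b) (right_mem_intv a b) hsd.2.1.1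
      (core_rule hcard huni.2.1 hsd h1 h2 h3) h4
  · intro T a b hsd _ f h1 h2 h3
    obtain ⟨i, hi⟩ := core_rule hcard huni.2.1 hsd h1 h2 h3
    exact ⟨i, fun P hP hp => hi P hP (hp i)⟩
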